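/- For every integer K > 1 there exists a uniquely ergodic C^{K-1} diffeomorphism T of the torus 𝕋² whose unique invariant Borel probability measure is the Haar–Lebesgue measure λ, such that T is measure-theoretically isomorphic to the rotation of the circle by some irrational number and the upper topological slow entropy of T with respect to the polynomial scaling family a^{pol}_m(t) = m^t satisfies 1/K⁵ ≤ ent̄^top_{a^{pol}}(T) < 1/(K⁵−K−8). -/

import Mathlib

open MeasureTheory Filter Set
open scoped Topology ENNReal NNReal

noncomputable section

/-- The Bowen metric `d_n^T(x,y) = max_{0 ≤ i ≤ n-1} d(T^i x, T^i y)`. -/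
def bowenDist {X : Type*} [PseudoMetricSpace X] (T : X → X) (n : ℕ) (x y : X) : ℝ :=
  (((Finset.range n).sup fun i => nndist (T^[i] x) (T^[i] y)) : ℝ≥0)

/-- `N_{d_n^T}(ε)`: the minimal number of `(ε,n)`-Bowen balls of `T` needed to cover the
whole space. -/
def bowenCoverNum {X : Type*} [PseudoMetricSpace X] (T : X → X) (n : ℕ) (ε : ℝ) : ℕ :=
  sInf {N : ℕ | ∃ F : Finset X, F.card = N ∧ ∀ y : X, ∃ x ∈ F, bowenDist T n x y < ε}

/-- `N(ε)`: the supremum (`0` if the set is empty, by the `Real.sSup` convention) of all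
`t > 0` such that `limsup_n N_{d_n^T}(ε) / a_n(t) > 0`. -/
def topSlowEntFun {X : Type*} [PseudoMetricSpace X] (T : X → X) (a : ℕ → ℝ → ℝ) (ε : ℝ) : ℝ :=
  sSup {t : ℝ | 0 < t ∧
    0 < Filter.atTop.limsup fun n => (bowenCoverNum T n ε : ℝ≥0∞) / ENNReal.ofReal (a n t)}

/-- The upper topological slow entropy of `T` with respect to the scaling family `a`
equals `E`, i.e. `N(ε) → E` as `ε → 0⁺`. -/
def HasUpperTopSlowEntropy {X : Type*} [PseudoMetricSpace X] (T : X → X)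
    (a : ℕ → ℝ → ℝ) (E : ℝ) : Prop :=
  Filter.Tendsto (topSlowEntFun T a) (𝓝[>] (0 : ℝ)) (𝓝 E)

/-- The circle `𝕋¹ = ℝ/ℤ` with its quotient metric and Haar–Lebesgue probability
measure `volume`. -/
abbrev Torus1 : Type := AddCircle (1 : ℝ)

/-- The 2-torus `𝕋² = ℝ²/ℤ²`, with its quotient (flat) metric, its Borel σ-algebra and
its Haar–Lebesgue probability measure `volume`. -/
abbrev Torus2 : Type := AddCircle (1 : ℝ) × AddCircle (1 : ℝ)

/-- Canonical projection `ℝ² → 𝕋²`. -/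
def torusProj : ℝ × ℝ → Torus2 := fun p => ((p.1 : Torus1), (p.2 : Torus1))

/-- `F : ℝ² → ℝ²` is a lift of `T : 𝕋² → 𝕋²`. -/
def IsLiftOf (F : ℝ × ℝ → ℝ × ℝ) (T : Torus2 → Torus2) : Prop :=
  ∀ p, torusProj (F p) = T (torusProj p)

/-- `T` is a `C^k` diffeomorphism of the torus: it is a bijection and both `T` and `T⁻¹`
admit `C^k` lifts to the universal cover `ℝ²`. -/
def IsCkTorusDiffeo (k : ℕ∞) (T : Torus2 → Torus2) : Prop :=
  Function.Bijective T ∧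
  (∃ F : ℝ × ℝ → ℝ × ℝ, ContDiff ℝ k F ∧ IsLiftOf F T) ∧
  (∃ G : ℝ × ℝ → ℝ × ℝ, ContDiff ℝ k G ∧ IsLiftOf G (Function.invFun T))

/-- `T` is weakly mixing w.r.t. the measure `μ`: `T × T` is ergodic for `μ × μ`. -/
def WeaklyMixing {X : Type*} [MeasurableSpace X] (T : X → X) (μ : Measure X) : Prop :=
  Ergodic (fun p : X × X => (T p.1, T p.2)) (μ.prod μ)

/-- `T` is uniquely ergodic with the Haar–Lebesgue measure `volume` as its unique
invariant Borel probability measure. -/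
def UniquelyErgodicWithVolume (T : Torus2 → Torus2) : Prop :=
  MeasurePreserving T volume volume ∧
  ∀ μ : Measure Torus2, IsProbabilityMeasure μ → MeasurePreserving T μ μ → μ = volume

/-- `T` (preserving the Haar measure `volume` on `𝕋²`) is measure-theoretically isomorphic
to the rotation of the circle `𝕋¹ = ℝ/ℤ` by some irrational number `α`. -/
def IsoToIrrationalRotation (T : Torus2 → Torus2) : Prop :=
  ∃ α : ℝ, Irrational α ∧
    ∃ (A : Set Torus2) (B : Set Torus1) (ψ : Torus2 → Torus1) (φ : Torus1 → Torus2),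
      MeasurableSet A ∧ MeasurableSet B ∧
      volume Aᶜ = 0 ∧ volume Bᶜ = 0 ∧
      Set.MapsTo T A A ∧ Set.MapsTo (fun y : Torus1 => y + (α : Torus1)) B B ∧
      Measurable ψ ∧ Measurable φ ∧
      Set.MapsTo ψ A B ∧ Set.MapsTo φ B A ∧
      (∀ x ∈ A, φ (ψ x) = x) ∧ (∀ y ∈ B, ψ (φ y) = y) ∧
      Measure.map ψ volume = volume ∧
      (∀ x ∈ A, ψ (T x) = ψ x + (α : Torus1))

/-- A finite measurable partition of `X`. -/
structure FinMeasPartition (X : Type*) [MeasurableSpace X] where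
  card : ℕ
  piece : Fin card → Set X
  measurable : ∀ i, MeasurableSet (piece i)
  disjoint : Pairwise fun i j => Disjoint (piece i) (piece j)
  cover : (⋃ i, piece i) = Set.univ

open Classical in
/-- The normalized Hamming distance between the length-`n` `P`-codings of the `T`-orbits
of `x` and `y` (the codings differ at time `k` iff `T^k x` and `T^k y` lie in different
pieces of `P`). -/
def codeHammingDist {X : Type*} [MeasurableSpace X] (T : X → X) (P : FinMeasPartition X)
    (n : ℕ) (x y : X) : ℝ :=
  (((Finset.range n).filter fun k =>
      ¬ ∃ i, T^[k] x ∈ P.piece i ∧ T^[k] y ∈ P.piece i).card : ℝ) / n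

/-- `S^H_P(T,n,ε)`: the minimal number of `(ε,n)`-Hamming balls whose union has
`μ`-measure greater than `1 - ε`. -/
def hammingCoverNum {X : Type*} [MeasurableSpace X] (μ : Measure X) (T : X → X)
    (P : FinMeasPartition X) (n : ℕ) (ε : ℝ) : ℕ :=
  sInf {N : ℕ | ∃ F : Finset X, F.card = N ∧
    ENNReal.ofReal (1 - ε) < μ (⋃ x ∈ F, {y | codeHammingDist T P n x y < ε})}

/-- For a fixed partition `P` and `ε > 0`: the supremum (with the `Real.sSup` convention,
`0` if the set is empty) of all `t > 0` with `limsup_n S^H_P(T,n,ε)/a_n(t) > 0`. -/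
def measSlowEntFun {X : Type*} [MeasurableSpace X] (μ : Measure X) (T : X → X)
    (a : ℕ → ℝ → ℝ) (P : FinMeasPartition X) (ε : ℝ) : ℝ :=
  sSup {t : ℝ | 0 < t ∧
    0 < Filter.atTop.limsup fun n =>
      (hammingCoverNum μ T P n ε : ℝ≥0∞) / ENNReal.ofReal (a n t)}

/-- The upper measure-theoretic slow entropy of `(T,μ)` w.r.t. the scaling family `a`
equals `E`: for every finite measurable partition the limit as `ε → 0⁺` exists, and the
least upper bound over all partitions of these limits is `E`. -/
def HasUpperMeasSlowEntropy {X : Type*} [MeasurableSpace X] (μ : Measure X) (T : X → X)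
    (a : ℕ → ℝ → ℝ) (E : ℝ) : Prop :=
  (∀ P : FinMeasPartition X, ∃ e : ℝ,
      Filter.Tendsto (measSlowEntFun μ T a P) (𝓝[>] (0 : ℝ)) (𝓝 e)) ∧
  IsLUB {e : ℝ | ∃ P : FinMeasPartition X,
      Filter.Tendsto (measSlowEntFun μ T a P) (𝓝[>] (0 : ℝ)) (𝓝 e)} E

/-- `Γ_r(x) = (Γ(x^{1/r} + 1))^r`, where `Γ` is the Euler Gamma function. -/
def GammaR (r : ℕ) (x : ℝ) : ℝ := (Real.Gamma (x ^ ((r : ℝ)⁻¹) + 1)) ^ r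

/-- The inverse of `Γ_r` on `[1,∞)` (where `Γ_r` is strictly increasing with `Γ_r 1 = 1`). -/
def GammaRInv (r : ℕ) (y : ℝ) : ℝ := sSup {x : ℝ | 1 ≤ x ∧ GammaR r x ≤ y}

/-- The intermediate scaling family `a^{int1,r}_m(t) = m^(t / Γ_r⁻¹(ln m / ln q₁))`. -/
def intScale1 (r q₁ : ℕ) (m : ℕ) (t : ℝ) : ℝ :=
  (m : ℝ) ^ (t / GammaRInv r (Real.log m / Real.log q₁))

/-- The intermediate scaling family
`a^{int2,r}_m(t) = m^(t / (Γ_r⁻¹(ln m / ln q₁))^((r-2)/r))`. -/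
def intScale2 (r q₁ : ℕ) (m : ℕ) (t : ℝ) : ℝ :=
  (m : ℝ) ^ (t / GammaRInv r (Real.log m / Real.log q₁) ^ (((r : ℝ) - 2) / (r : ℝ)))

/-- The logarithmic scaling family `a^{ln}_m(t) = (ln m)^t`. -/
def logScale (m : ℕ) (t : ℝ) : ℝ := Real.log m ^ t

/-- The polynomial scaling family `a^{pol}_m(t) = m^t`. -/
def polScale (m : ℕ) (t : ℝ) : ℝ := (m : ℝ) ^ t

end

/-! The Anosov–Katok method with explicit conjugations. Let `g n` be `1 / q n` times the deviation
from the identity of a staircase of degree one that is constant outside an interval of relative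
length `1 / s n`, and let `H (n + 1) = H n ∘ A n`, where
`A n (x, y) = (x + g n y, y - q n * (x + g n y))`. The block `A n` conjugates the translation by
`(t, 0)` to the translation by `(t, -q n * t)`. With `alpha (n + 1) = alpha n + 1 / q (n + 1)` and
`S n = H n ∘ (· + (alpha n, 0)) ∘ (H n)⁻¹`, both `S n` and `S (n + 1)` are therefore conjugate by
`H n` to translations, and these differ by only `q n / q (n + 1)`. If `q (n + 1) = q n ^ d` with
`d` large compared to the order of differentiability, the `S n` converge to a diffeomorphism `T`.

Within `q (n + 1)` steps the orbits of the translation behind `S (n + 1)` become so dense that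
Birkhoff averages along `T` are nearly constant: `T` is uniquely ergodic. The first coordinates of
the `(H n)⁻¹` converge to a factor map onto the rotation by `lim alpha n`. The second coordinate of
`A n (x, y)` is `-q n * x` plus the value of the staircase, hence determined by `x` outside a set of
small measure, so the factor map is injective almost everywhere.

Up to a time of order `q (n + 1) ^ (d - 2)`, `T` shadows an isometry conjugated by `H n`, so that a
grid of `O (q n)` points yields a Bowen cover; this gives slow entropy at most `1 / (d - 2)`.
Conversely, `s n = q n ^ (d - 3)` points on a vertical segment are separated by the steep part of
the staircase at some time before `q (n + 2) = q n ^ d ^ 2`, which gives slow entropy at least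
`(d - 3) / d ^ 2`. For `d = K ^ 5 - 4` both values lie in the required interval. -/

open scoped ContDiff

namespace AnosovKatok

section DerivBound

variable {𝕜 : Type*} [NontriviallyNormedField 𝕜]
  {E : Type*} [NormedAddCommGroup E] [NormedSpace 𝕜 E]
  {F : Type*} [NormedAddCommGroup F] [NormedSpace 𝕜 F]
  {G : Type*} [NormedAddCommGroup G] [NormedSpace 𝕜 G]
  {k : ℕ} {M N : ℝ} {f g : E → F}

variable (𝕜) in
/-- `f` is `C^k` with derivatives of geometric growth, `‖D^i f‖ ≤ M ^ i` for `1 ≤ i ≤ k`. This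
replaces the `C^k` norms of the Anosov–Katok method: rescaling multiplies `M`, and composition
costs only a factor depending on `k`. -/
structure DerivBound (k : ℕ) (M : ℝ) (f : E → F) : Prop where
  contDiff : ContDiff 𝕜 k f
  norm_iteratedFDeriv_le : ∀ i, 1 ≤ i → i ≤ k → ∀ x, ‖iteratedFDeriv 𝕜 i f x‖ ≤ M ^ i

theorem iteratedFDeriv_add_const {i : ℕ} (hi : i ≠ 0) (hf : ContDiff 𝕜 i f) (c : F) :
    iteratedFDeriv 𝕜 i (fun x => f x + c) = iteratedFDeriv 𝕜 i f := by
  ext1 x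
  have h := iteratedFDeriv_add_apply (x := x) hf.contDiffAt
    (contDiff_const (c := c) (n := i)).contDiffAt
  rwa [iteratedFDeriv_const_of_ne hi, Pi.zero_apply, add_zero] at h

namespace DerivBound

theorem mono (hf : DerivBound 𝕜 k M f) (hM : 0 ≤ M) (hMN : M ≤ N) : DerivBound 𝕜 k N f where
  contDiff := hf.contDiff
  norm_iteratedFDeriv_le i h1 hi x :=
    (hf.norm_iteratedFDeriv_le i h1 hi x).trans (pow_le_pow_left₀ hM hMN i)

theorem of_le (hf : DerivBound 𝕜 k M f) {j : ℕ} (hj : j ≤ k) : DerivBound 𝕜 j M f where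
  contDiff := hf.contDiff.of_le (mod_cast hj)
  norm_iteratedFDeriv_le i h1 hi := hf.norm_iteratedFDeriv_le i h1 (hi.trans hj)

protected theorem add (hf : DerivBound 𝕜 k M f) (hg : DerivBound 𝕜 k N g) (hM : 0 ≤ M)
    (hN : 0 ≤ N) : DerivBound 𝕜 k (M + N) (f + g) where
  contDiff := hf.contDiff.add hg.contDiff
  norm_iteratedFDeriv_le i h1 hi x := by
    have hik : (i : WithTop ℕ∞) ≤ k := mod_cast hi
    rw [iteratedFDeriv_add_apply (hf.contDiff.of_le hik).contDiffAt
      (hg.contDiff.of_le hik).contDiffAt]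
    calc _ ≤ M ^ i + N ^ i := norm_add_le_of_le (hf.norm_iteratedFDeriv_le i h1 hi x)
            (hg.norm_iteratedFDeriv_le i h1 hi x)
      _ ≤ (M + N) ^ i := pow_add_pow_le hM hN (by omega)

protected theorem neg (hf : DerivBound 𝕜 k M f) : DerivBound 𝕜 k M (-f) where
  contDiff := hf.contDiff.neg
  norm_iteratedFDeriv_le i h1 hi x := by
    simpa [iteratedFDeriv_neg_apply] using hf.norm_iteratedFDeriv_le i h1 hi x

theorem clm_comp (hf : DerivBound 𝕜 k M f) {C : ℝ} (hC : 1 ≤ C) (L : F →L[𝕜] G)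
    (hL : ‖L‖ ≤ C) : DerivBound 𝕜 k (C * M) (L ∘ f) where
  contDiff := L.contDiff.comp hf.contDiff
  norm_iteratedFDeriv_le i h1 hi x := by
    have hik : (i : WithTop ℕ∞) ≤ k := mod_cast hi
    calc _ ≤ ‖L‖ * ‖iteratedFDeriv 𝕜 i f x‖ :=
          L.norm_iteratedFDeriv_comp_left (hf.contDiff.of_le hik).contDiffAt le_rfl
      _ ≤ C ^ i * M ^ i := by
          gcongr
          · exact hL.trans (le_self_pow₀ hC (by omega))
          · exact hf.norm_iteratedFDeriv_le i h1 hi x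
      _ = (C * M) ^ i := (mul_pow C M i).symm

theorem comp_clm {f : F → G} (hf : DerivBound 𝕜 k M f) (hM : 0 ≤ M) {C : ℝ} (L : E →L[𝕜] F)
    (hL : ‖L‖ ≤ C) : DerivBound 𝕜 k (M * C) (f ∘ L) where
  contDiff := hf.contDiff.comp L.contDiff
  norm_iteratedFDeriv_le i h1 hi x := by
    rw [L.iteratedFDeriv_comp_right hf.contDiff x (mod_cast hi)]
    calc _ ≤ ‖iteratedFDeriv 𝕜 i f (L x)‖ * ∏ _ : Fin i, ‖L‖ :=
          ContinuousMultilinearMap.norm_compContinuousLinearMap_le _ _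
      _ = ‖iteratedFDeriv 𝕜 i f (L x)‖ * ‖L‖ ^ i := by simp
      _ ≤ M ^ i * C ^ i := by
          gcongr
          exact hf.norm_iteratedFDeriv_le i h1 hi _
      _ = (M * C) ^ i := (mul_pow M C i).symm

protected theorem id : DerivBound 𝕜 k 1 (id : E → E) where
  contDiff := contDiff_id
  norm_iteratedFDeriv_le i h1 _ x := by
    obtain ⟨j, rfl⟩ : ∃ j, i = j + 1 := ⟨i - 1, by omega⟩
    have hderiv : fderiv 𝕜 (_root_.id : E → E) = fun _ => .id 𝕜 E := funext fun _ => fderiv_id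
    rw [← norm_iteratedFDeriv_fderiv, hderiv, one_pow]
    rcases Nat.eq_zero_or_pos j with rfl | hj
    · simpa using ContinuousLinearMap.norm_id_le
    · simp [iteratedFDeriv_const_of_ne hj.ne']

protected theorem comp {g : F → G} {f : E → F} (hg : DerivBound 𝕜 k N g) (hf : DerivBound 𝕜 k M f)
    (hM : 0 ≤ M) (hN : 1 ≤ N) : DerivBound 𝕜 k (k.factorial * N ^ k * M) (g ∘ f) where
  contDiff := hg.contDiff.comp hf.contDiff
  norm_iteratedFDeriv_le i h1 hi x := by
    have hik : (i : WithTop ℕ∞) ≤ k := mod_cast hi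
    -- The chain rule bound involves the size of the outer function, so normalize it at `f x`.
    have hnorm : iteratedFDeriv 𝕜 i (g ∘ f) x =
        iteratedFDeriv 𝕜 i ((fun y => g y + -g (f x)) ∘ f) x :=
      (congrFun (iteratedFDeriv_add_const (by omega)
        ((hg.contDiff.comp hf.contDiff).of_le hik) _) x).symm
    have hbound : ‖iteratedFDeriv 𝕜 i (g ∘ f) x‖ ≤ i.factorial * N ^ k * M ^ i := by
      rw [hnorm]
      refine norm_iteratedFDeriv_comp_le (hg.contDiff.add contDiff_const) hf.contDiff hik x
        (fun j hj => ?_) (fun j hj hji => hf.norm_iteratedFDeriv_le j hj (hji.trans hi) x)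
      rcases Nat.eq_zero_or_pos j with rfl | hj0
      · simp only [norm_iteratedFDeriv_zero, add_neg_cancel, norm_zero]
        positivity
      · rw [iteratedFDeriv_add_const hj0.ne'
          (hg.contDiff.of_le (mod_cast hj.trans hi))]
        exact (hg.norm_iteratedFDeriv_le j hj0 (hj.trans hi) _).trans
          (pow_le_pow_right₀ hN (hj.trans hi))
    have hfac : (1 : ℝ) ≤ k.factorial := mod_cast k.factorial_pos
    calc _ ≤ k.factorial * N ^ k * M ^ i := hbound.trans (by gcongr)
      _ ≤ (k.factorial * N ^ k) ^ i * M ^ i := by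
          gcongr
          exact le_self_pow₀ (one_le_mul_of_one_le_of_one_le hfac (one_le_pow₀ hN)) (by omega)
      _ = _ := (mul_pow _ M i).symm

theorem of_eventuallyEq_translate {f g : E → F} (hg : DerivBound 𝕜 k M g)
    (h : ∀ x, ∃ a c, f =ᶠ[𝓝 x] fun z => g (z + a) + c) : DerivBound 𝕜 k M f where
  contDiff := contDiff_iff_contDiffAt.2 fun x => by
    obtain ⟨a, c, hx⟩ := h x
    have hga : ContDiff 𝕜 k fun z => g (z + a) :=
      hg.contDiff.comp (contDiff_id.add contDiff_const)
    exact (hga.add contDiff_const).contDiffAt.congr_of_eventuallyEq hx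
  norm_iteratedFDeriv_le i h1 hi x := by
    obtain ⟨a, c, hx⟩ := h x
    have hga : ContDiff 𝕜 k fun z => g (z + a) :=
      hg.contDiff.comp (contDiff_id.add contDiff_const)
    rw [(hx.iteratedFDeriv 𝕜 i).eq_of_nhds, iteratedFDeriv_add_const (by omega)
      (hga.of_le (mod_cast hi)), iteratedFDeriv_comp_add_right]
    exact hg.norm_iteratedFDeriv_le i h1 hi _

variable [NormedSpace ℝ E] [NormedSpace ℝ F] [NormedSpace ℝ G]

theorem exists_of_hasCompactSupport_fderiv {f : E → F} (hf : ContDiff ℝ k f)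
    (hc : HasCompactSupport (fderiv ℝ f)) :
    ∃ B : ℕ, DerivBound ℝ k B f := by
  have hbound (i : ℕ) (h1 : 1 ≤ i) (hi : i ≤ k) : ∃ C, ∀ x, ‖iteratedFDeriv ℝ i f x‖ ≤ C := by
    obtain ⟨j, rfl⟩ : ∃ j, i = j + 1 := ⟨i - 1, by omega⟩
    have hcont : Continuous (iteratedFDeriv ℝ j (fderiv ℝ f)) :=
      (hf.fderiv_right (m := j) (mod_cast hi)).continuous_iteratedFDeriv le_rfl
    obtain ⟨C, hC⟩ := (hc.iteratedFDeriv j).exists_bound_of_continuous hcont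
    exact ⟨C, fun x => norm_iteratedFDeriv_fderiv.symm.trans_le (hC x)⟩
  choose! C hC using hbound
  refine ⟨1 + ∑ i ∈ Finset.range (k + 1), ⌈C i⌉₊, hf, fun i h1 hi x => ?_⟩
  have hle : ⌈C i⌉₊ ≤ ∑ i ∈ Finset.range (k + 1), ⌈C i⌉₊ :=
    Finset.single_le_sum (f := fun i => ⌈C i⌉₊) (fun _ _ => Nat.zero_le _) (by simp; omega)
  calc _ ≤ (⌈C i⌉₊ : ℝ) := (hC i h1 hi x).trans (Nat.le_ceil _)
    _ ≤ (1 + ∑ i ∈ Finset.range (k + 1), ⌈C i⌉₊ : ℕ) := by exact_mod_cast hle.trans (by omega)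
    _ ≤ _ := le_self_pow₀ (by norm_cast; omega) (by omega)

theorem dist_le {f : E → F} (hf : DerivBound ℝ k M f) (hk : 1 ≤ k) (x y : E) :
    dist (f x) (f y) ≤ M * dist x y := by
  rw [dist_eq_norm, dist_eq_norm]
  refine convex_univ.norm_image_sub_le_of_norm_fderiv_le (𝕜 := ℝ)
    (fun z _ => hf.contDiff.differentiable (by simp; omega) z) (fun z _ => ?_) (mem_univ y)
    (mem_univ x)
  simpa [norm_iteratedFDeriv_one] using hf.norm_iteratedFDeriv_le 1 le_rfl hk z

theorem norm_iteratedFDeriv_translate_sub_le {f : E → F} (hf : DerivBound ℝ (k + 1) M f)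
    (hM : 1 ≤ M) {i : ℕ} (hi : i ≤ k) (u v x : E) :
    ‖iteratedFDeriv ℝ i (fun y => f (y + u) - f (y + v)) x‖ ≤ M ^ (k + 1) * ‖u - v‖ := by
  have hcd (w : E) : ContDiff ℝ i fun y => f (y + w) :=
    (hf.contDiff.of_le (mod_cast by omega)).comp (contDiff_id.add contDiff_const)
  have hsub := iteratedFDeriv_sub_apply (x := x) (hcd u).contDiffAt (hcd v).contDiffAt
  rw [iteratedFDeriv_comp_add_right, iteratedFDeriv_comp_add_right] at hsub
  have hmv : ‖iteratedFDeriv ℝ i f (x + u) - iteratedFDeriv ℝ i f (x + v)‖ ≤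
      M ^ (k + 1) * ‖x + u - (x + v)‖ := by
    refine convex_univ.norm_image_sub_le_of_norm_fderiv_le (𝕜 := ℝ)
      (fun z _ => hf.contDiff.differentiable_iteratedFDeriv (by exact_mod_cast (by omega)) z)
      (fun z _ => ?_) (mem_univ _) (mem_univ _)
    rw [norm_fderiv_iteratedFDeriv]
    exact (hf.norm_iteratedFDeriv_le (i + 1) (by omega) (by omega) z).trans
      (pow_le_pow_right₀ hM (by omega))
  rw [add_sub_add_left_eq_sub] at hmv
  exact (congrArg norm hsub).trans_le hmv

theorem norm_iteratedFDeriv_comp_translate_sub_le {f : F → G} {g : E → F}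
    (hf : DerivBound ℝ (k + 1) M f) (hM : 1 ≤ M) (hg : DerivBound ℝ k N g) (u v : F) (x : E) :
    ‖iteratedFDeriv ℝ k (fun y => f (g y + u) - f (g y + v)) x‖ ≤
      k.factorial * (M ^ (k + 1) * ‖u - v‖) * N ^ k := by
  have hcd (w : F) : ContDiff ℝ k fun y => f (y + w) :=
    (hf.contDiff.of_le (mod_cast by omega)).comp (contDiff_id.add contDiff_const)
  exact norm_iteratedFDeriv_comp_le ((hcd u).sub (hcd v)) hg.contDiff le_rfl x
    (fun i hi => hf.norm_iteratedFDeriv_translate_sub_le hM hi u v (g x))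
    (fun i h1 hi => hg.norm_iteratedFDeriv_le i h1 hi x)

end DerivBound

end DerivBound

section Sawtooth

theorem exists_derivBound_smoothTransition (k : ℕ) :
    ∃ B : ℕ, DerivBound ℝ k B Real.smoothTransition := by
  refine DerivBound.exists_of_hasCompactSupport_fderiv Real.smoothTransition.contDiff
    (HasCompactSupport.intro (K := Icc 0 1) isCompact_Icc fun x hx => ?_)
  rcases lt_or_ge x 0 with h0 | h0
  · have : Real.smoothTransition =ᶠ[𝓝 x] fun _ => 0 := by
      filter_upwards [Iio_mem_nhds h0] with y hy using Real.smoothTransition.zero_of_nonpos hy.le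
    rw [this.fderiv_eq, fderiv_fun_const, Pi.zero_apply]
  · have h1 : 1 < x := by simpa [h0] using hx
    have : Real.smoothTransition =ᶠ[𝓝 x] fun _ => 1 := by
      filter_upwards [Ioi_mem_nhds h1] with y hy using Real.smoothTransition.one_of_one_le hy.le
    rw [this.fderiv_eq, fderiv_fun_const, Pi.zero_apply]

/-- The smooth staircase, a degree-one map which climbs from `⌊y⌋` to `⌊y⌋ + 1` while
`Int.fract y ∈ [0, 1 / s]` and is constant on the remainder of each unit interval. -/
noncomputable def smoothStair (s y : ℝ) : ℝ := ⌊y⌋ + Real.smoothTransition (s * Int.fract y)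

theorem smoothStair_add_one (s y : ℝ) : smoothStair s (y + 1) = smoothStair s y + 1 := by
  simp only [smoothStair, Int.floor_add_one, Int.fract_add_one]
  push_cast
  ring

theorem smoothStair_of_mem_Ico {y : ℝ} (hy : y ∈ Ico 0 1) (s : ℝ) :
    smoothStair s y = Real.smoothTransition (s * y) := by
  rw [smoothStair, Int.floor_eq_zero_iff.2 hy, Int.fract_eq_self.2 hy, Int.cast_zero, zero_add]

theorem abs_sub_smoothStair_le (s y : ℝ) : |y - smoothStair s y| ≤ 1 := by
  have h0 := Real.smoothTransition.nonneg (s * Int.fract y)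
  have h1 := Real.smoothTransition.le_one (s * Int.fract y)
  have := Int.floor_add_fract y
  rw [abs_le, smoothStair]
  constructor <;> linarith [Int.fract_nonneg y, Int.fract_lt_one y]

theorem smoothStair_eventuallyEq {s : ℝ} (hs : 2 ≤ s) (y : ℝ) :
    smoothStair s =ᶠ[𝓝 y] fun z => Real.smoothTransition (s * (z + -⌊y⌋)) + ⌊y⌋ := by
  have hleft : (⌊y⌋ : ℝ) - 1 / 2 < y := by linarith [Int.floor_le y]
  filter_upwards [Ioo_mem_nhds hleft (Int.lt_floor_add_one y)] with z hz
  rcases lt_or_ge z ⌊y⌋ with h | h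
  · have hfloor : ⌊z⌋ = ⌊y⌋ - 1 := by
      rw [Int.floor_eq_iff]
      push_cast
      constructor <;> linarith [hz.1]
    have hfract : Int.fract z = z - ⌊y⌋ + 1 := by
      rw [Int.fract, hfloor]
      push_cast
      ring
    rw [smoothStair, hfract, hfloor, Real.smoothTransition.one_of_one_le (by nlinarith [hz.1]),
      Real.smoothTransition.zero_of_nonpos (by nlinarith)]
    push_cast
    ring
  · have hfloor : ⌊z⌋ = ⌊y⌋ := Int.floor_eq_iff.2 ⟨h, hz.2⟩
    rw [smoothStair, Int.fract, hfloor, add_comm, sub_eq_add_neg]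

variable {k : ℕ} {B q s : ℝ}

protected theorem DerivBound.smoothStair (hB : DerivBound ℝ k B Real.smoothTransition) (hB0 : 0 ≤ B)
    (hs : 2 ≤ s) : DerivBound ℝ k (B * s) (smoothStair s) :=
  (hB.comp_clm hB0 (s • ContinuousLinearMap.id ℝ ℝ)
    (by simp [norm_smul, abs_of_nonneg (zero_le_two.trans hs)])).of_eventuallyEq_translate
    fun y => ⟨-⌊y⌋, ⌊y⌋, smoothStair_eventuallyEq hs y⟩

/-- The deviation of the smooth staircase from the identity, scaled by `1 / q`. -/
noncomputable def sawtooth (q s y : ℝ) : ℝ := (y - smoothStair s y) / q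

theorem sawtooth_periodic (q s : ℝ) : Function.Periodic (sawtooth q s) 1 := fun y => by
  rw [sawtooth, smoothStair_add_one, add_sub_add_right_eq_sub, sawtooth]

theorem abs_sawtooth_le (hq : 0 ≤ q) (s y : ℝ) : |sawtooth q s y| ≤ 1 / q := by
  rw [sawtooth, abs_div, abs_of_nonneg hq]
  exact div_le_div_of_nonneg_right (abs_sub_smoothStair_le s y) hq

protected theorem DerivBound.sawtooth (hB : DerivBound ℝ k B Real.smoothTransition) (hB0 : 0 ≤ B)
    (hs : 2 ≤ s) (hq : 1 ≤ q) : DerivBound ℝ k (1 + B * s) (sawtooth q s) := by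
  have hdiff := DerivBound.id.add (hB.smoothStair hB0 hs).neg zero_le_one (by positivity)
  have hscale : ‖q⁻¹ • ContinuousLinearMap.id ℝ ℝ‖ ≤ 1 := by
    rw [norm_smul, ContinuousLinearMap.norm_id, mul_one, norm_inv,
      Real.norm_of_nonneg (by linarith)]
    exact inv_le_one_of_one_le₀ hq
  have h := hdiff.clm_comp le_rfl _ hscale
  rw [one_mul] at h
  convert h using 1
  ext y
  simp only [AnosovKatok.sawtooth, Function.comp_apply, Pi.add_apply, Pi.neg_apply, id_eq,
    smul_apply, ContinuousLinearMap.id_apply, smul_eq_mul]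
  ring

end Sawtooth

section DoubleShear

variable {A : Type*} [AddCommGroup A] [TopologicalSpace A] [IsTopologicalAddGroup A]

/-- One building block of the conjugations: the horizontal shear by `g` followed by the linear
vertical shear of slope `-q`. The plane (for lifts) and the torus are the cases `A = ℝ` and
`A = ℝ / ℤ`. -/
def doubleShear (q : ℕ) (g : C(A, A)) : A × A ≃ₜ A × A where
  toFun p := (p.1 + g p.2, p.2 - q • (p.1 + g p.2))
  invFun p := (p.1 - g (p.2 + q • p.1), p.2 + q • p.1)
  left_inv p := by simp
  right_inv p := by simp
  continuous_toFun := by fun_prop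
  continuous_invFun := by fun_prop

theorem doubleShear_apply (q : ℕ) (g : C(A, A)) (p : A × A) :
    doubleShear q g p = (p.1 + g p.2, p.2 - q • (p.1 + g p.2)) :=
  rfl

theorem doubleShear_symm_apply (q : ℕ) (g : C(A, A)) (p : A × A) :
    (doubleShear q g).symm p = (p.1 - g (p.2 + q • p.1), p.2 + q • p.1) :=
  rfl

theorem doubleShear_symm_add (q : ℕ) (g : C(A, A)) (p : A × A) (t : A) :
    doubleShear q g ((doubleShear q g).symm p + (t, 0)) = p + (t, -(q • t)) := by
  ext <;> simp only [doubleShear_apply, doubleShear_symm_apply, Prod.fst_add, Prod.snd_add,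
    add_zero, smul_add, smul_sub] <;> abel

/-- The conjugation of stage `n`, a composition of `n` double shears (the outermost first). -/
def conjugation (q : ℕ → ℕ) (g : ℕ → C(A, A)) : ℕ → (A × A ≃ₜ A × A)
  | 0 => 1
  | n + 1 => conjugation q g n * doubleShear (q n) (g n)

variable {A' : Type*} [AddCommGroup A'] [TopologicalSpace A'] [IsTopologicalAddGroup A']

theorem semiconj_doubleShear (π : A →+ A') (q : ℕ) {g : C(A, A)} {g' : C(A', A')}
    (h : Function.Semiconj π g g') :
    Function.Semiconj (Prod.map π π) (doubleShear q g) (doubleShear q g') := fun p => by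
  simp [doubleShear_apply, h.eq]

theorem semiconj_conjugation (π : A →+ A') (q : ℕ → ℕ) {g : ℕ → C(A, A)} {g' : ℕ → C(A', A')}
    (h : ∀ n, Function.Semiconj π (g n) (g' n)) (n : ℕ) :
    Function.Semiconj (Prod.map π π) (conjugation q g n) (conjugation q g' n) := by
  induction n with
  | zero => exact Function.Semiconj.id_right
  | succ n ih => exact ih.comp_right (semiconj_doubleShear π (q n) (h n))

variable {k : ℕ} {M : ℝ}

/-- The linear vertical shear of slope `c` of the plane. -/
def linearShear (c : ℝ) : ℝ × ℝ →L[ℝ] ℝ × ℝ :=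
  (ContinuousLinearMap.fst ℝ ℝ ℝ).prod
    (ContinuousLinearMap.snd ℝ ℝ ℝ + c • ContinuousLinearMap.fst ℝ ℝ ℝ)

theorem linearShear_apply (c : ℝ) (p : ℝ × ℝ) : linearShear c p = (p.1, p.2 + c * p.1) :=
  rfl

theorem norm_linearShear_le (c : ℝ) : ‖linearShear c‖ ≤ 1 + |c| := by
  refine ContinuousLinearMap.opNorm_le_bound _ (by positivity) fun p => max_le ?_ ?_
  · calc ‖p.1‖ ≤ 1 * ‖p‖ := (norm_fst_le p).trans_eq (one_mul _).symm
      _ ≤ (1 + |c|) * ‖p‖ := by gcongr; linarith [abs_nonneg c]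
  · calc ‖p.2 + c * p.1‖ ≤ ‖p.2‖ + |c| * ‖p.1‖ := by
          simpa [norm_mul] using norm_add_le p.2 (c * p.1)
      _ ≤ ‖p‖ + |c| * ‖p‖ := by gcongr; exacts [norm_snd_le p, norm_fst_le p]
      _ = (1 + |c|) * ‖p‖ := by ring

theorem DerivBound.horizontalShear {g : ℝ → ℝ} (hg : DerivBound ℝ k M g) (hM : 0 ≤ M) :
    DerivBound ℝ k (1 + M) fun p : ℝ × ℝ => (p.1 + g p.2, p.2) := by
  have hinl : ‖ContinuousLinearMap.inl ℝ ℝ ℝ‖ ≤ 1 :=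
    ContinuousLinearMap.opNorm_le_bound _ zero_le_one fun x => by simp
  have h := DerivBound.id.add (((hg.comp_clm hM _ (ContinuousLinearMap.norm_snd_le ℝ ℝ ℝ)).clm_comp
    le_rfl _ hinl)) zero_le_one (by positivity)
  rw [mul_one, one_mul] at h
  convert h using 1
  ext p <;> simp

protected theorem DerivBound.doubleShear {g : C(ℝ, ℝ)} (hg : DerivBound ℝ k M g) (hM : 0 ≤ M)
    (q : ℕ) : DerivBound ℝ k ((1 + q) * (1 + M)) (doubleShear q g) := by
  have h := (hg.horizontalShear hM).clm_comp (C := 1 + q) (by simp) (linearShear (-q))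
    (by simpa using norm_linearShear_le (-q))
  convert h using 1
  ext p
  · rfl
  · simp only [doubleShear_apply, linearShear_apply, Function.comp_apply, nsmul_eq_mul]
    ring

theorem DerivBound.doubleShear_symm {g : C(ℝ, ℝ)} (hg : DerivBound ℝ k M g) (hM : 0 ≤ M)
    (q : ℕ) : DerivBound ℝ k ((1 + q) * (1 + M)) (doubleShear q g).symm := by
  have h := (hg.neg.horizontalShear hM).comp_clm (C := 1 + q) (by positivity)
    (linearShear q) (by simpa using norm_linearShear_le q)
  rw [mul_comm]
  convert h using 1
  ext p <;> simp [doubleShear_symm_apply, linearShear_apply, sub_eq_add_neg]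

end DoubleShear

section Limits

variable {X : Type*} [MetricSpace X] {δ : ℕ → ℝ}

theorem le_div_two_pow_of_halving (hδ : ∀ n, 2 * δ (n + 1) ≤ δ n) (m n : ℕ) :
    δ (n + m) ≤ δ m / 2 ^ n := by
  induction n with
  | zero => simp
  | succ n ih =>
    rw [pow_succ, ← div_div, le_div_iff₀ two_pos, mul_comm, Nat.succ_add]
    exact (hδ (n + m)).trans ih

theorem summable_of_halving (hδ : ∀ n, 2 * δ (n + 1) ≤ δ n) (h0 : ∀ n, 0 ≤ δ n) : Summable δ :=
  (summable_geometric_two.mul_left (δ 0)).of_nonneg_of_le h0 fun n => by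
    simpa [div_eq_mul_inv] using le_div_two_pow_of_halving hδ 0 n

theorem tendstoUniformly_of_dist_le {ι Y : Type*} {l : Filter ι} {f : ι → Y → X} {F : Y → X}
    {δ : ι → ℝ} (hδ : Tendsto δ l (𝓝 0)) (h : ∀ n y, dist (f n y) (F y) ≤ δ n) :
    TendstoUniformly f F l := by
  rw [Metric.tendstoUniformly_iff]
  intro ε hε
  filter_upwards [hδ.eventually_lt_const hε] with n hn y
  exact (dist_comm _ _).trans_le (h n y) |>.trans_lt hn

variable [CompleteSpace X]

theorem exists_tendsto_of_dist_le_halving {u : ℕ → X} (hδ : ∀ n, 2 * δ (n + 1) ≤ δ n)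
    (hu : ∀ n, dist (u n) (u (n + 1)) ≤ δ n) :
    ∃ x, Tendsto u atTop (𝓝 x) ∧ ∀ n, dist (u n) x ≤ 2 * δ n := by
  have hgeom (m n : ℕ) : dist (u (n + m)) (u (n + 1 + m)) ≤ 2 * δ m / 2 / 2 ^ n := by
    rw [mul_div_cancel_left₀ _ two_ne_zero, Nat.succ_add]
    exact (hu (n + m)).trans (le_div_two_pow_of_halving hδ m n)
  obtain ⟨x, hx⟩ := cauchySeq_tendsto_of_complete (cauchySeq_of_le_geometric_two (hgeom 0))
  refine ⟨x, hx, fun m => ?_⟩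
  simpa using dist_le_of_le_geometric_two_of_tendsto₀ (hgeom m)
    (hx.comp (tendsto_add_atTop_nat m))

theorem exists_homeomorph_dist_zpow_le (hδ : ∀ n, 2 * δ (n + 1) ≤ δ n) (h0 : ∀ n, 0 ≤ δ n)
    (S : ℕ → X ≃ₜ X)
    (hS : ∀ n (i : ℤ) z, dist ((S n ^ i) z) ((S (n + 1) ^ i) z) ≤ |(i : ℝ)| * δ n) :
    ∃ T : X ≃ₜ X, ∀ n (i : ℤ) z, dist ((S n ^ i) z) ((T ^ i) z) ≤ |(i : ℝ)| * (2 * δ n) := by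
  have hlim (i : ℤ) (z : X) : ∃ x, Tendsto (fun n => (S n ^ i) z) atTop (𝓝 x) ∧
      ∀ n, dist ((S n ^ i) z) x ≤ |(i : ℝ)| * (2 * δ n) := by
    obtain ⟨x, hx, hd⟩ := exists_tendsto_of_dist_le_halving (δ := fun n => |(i : ℝ)| * δ n)
      (fun n => by rw [mul_left_comm]; gcongr; exact hδ n) (fun n => hS n i z)
    exact ⟨x, hx, fun n => (hd n).trans_eq (mul_left_comm _ _ _)⟩
  choose φ hφ hdist using hlim
  have hunif (i : ℤ) : TendstoUniformly (fun n => ⇑(S n ^ i)) (φ i) atTop := by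
    refine tendstoUniformly_of_dist_le ?_ fun n z => hdist i z n
    simpa using ((summable_of_halving hδ h0).tendsto_atTop_zero.const_mul 2).const_mul |(i : ℝ)|
  have hcont (i : ℤ) : Continuous (φ i) :=
    (hunif i).continuous (.of_forall fun n => (S n ^ i).continuous)
  have hadd (i j : ℤ) (z : X) : φ (i + j) z = φ i (φ j z) := by
    refine tendsto_nhds_unique (hφ (i + j) z) ?_
    exact ((hunif i).tendsto_comp (hcont i).continuousAt (hφ j z)).congr fun n => by
      rw [zpow_add, Homeomorph.mul_apply]
  have hzero (z : X) : φ 0 z = z := tendsto_nhds_unique (hφ 0 z) (by simp)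
  let T : X ≃ₜ X :=
    { toFun := φ 1
      invFun := φ (-1)
      left_inv z := by rw [← hadd, neg_add_cancel, hzero]
      right_inv z := by rw [← hadd, add_neg_cancel, hzero]
      continuous_toFun := hcont 1
      continuous_invFun := hcont (-1) }
  have hpow (i : ℤ) : ∀ z, (T ^ i) z = φ i z := by
    induction i with
    | zero => simp [hzero]
    | succ i ih =>
      intro z
      rw [zpow_add_one, Homeomorph.mul_apply, ih, hadd]
      rfl
    | pred i ih =>
      intro z
      rw [zpow_sub_one, Homeomorph.mul_apply, ih, sub_eq_add_neg, hadd]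
      rfl
  exact ⟨T, fun n i z => hpow i z ▸ hdist i z n⟩

end Limits

section Params

open scoped Nat

/-- The parameters of the construction: `K` is the order of differentiability under control,
`d` the exponent of the recursion `q (n + 1) = q n ^ d`, `Q` the initial value of `q`, and `B`
bounds the derivatives of the smooth transition function. -/
structure Params (K d : ℕ) where
  Q : ℕ
  B : ℕ
  one_le_order : 1 ≤ K
  le_exponent : K ^ 2 + K + 3 ≤ d
  derivBound_smoothTransition : DerivBound ℝ K B Real.smoothTransition
  thousand_le : 1000 ≤ Q
  factorial_mul_pow_le : K ! * (2 * (B + 2)) ^ K ≤ Q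

theorem nonempty_params {K d : ℕ} (hK : 1 ≤ K) (hd : K ^ 2 + K + 3 ≤ d) :
    Nonempty (Params K d) := by
  obtain ⟨B, hB⟩ := exists_derivBound_smoothTransition K
  exact ⟨⟨K ! * (2 * (B + 2)) ^ K + 1000, B, hK, hd, hB, by lia, by lia⟩⟩

namespace Params

variable {K d : ℕ} (c : Params K d) (n : ℕ)

/-- The denominators `q n = Q ^ d ^ n`. -/
def q : ℕ :=
  c.Q ^ d ^ n

/-- The steepness of the `n`-th smooth staircase, chosen so that `s n * q n ^ 3 = q (n + 1)`. -/
def s : ℕ :=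
  c.q n ^ (d - 3)

include c in
theorem five_le_exponent : 5 ≤ d := by
  have := c.le_exponent
  have := c.one_le_order
  nlinarith

theorem q_succ : c.q (n + 1) = c.q n ^ d := by
  rw [q, pow_succ, pow_mul, q]

theorem Q_le_q : c.Q ≤ c.q n :=
  Nat.le_self_pow (pow_pos (by have := c.five_le_exponent; lia) n).ne' _

theorem thousand_le_q : 1000 ≤ c.q n :=
  c.thousand_le.trans (c.Q_le_q n)

theorem q_pos : 0 < c.q n := by
  linarith [c.thousand_le_q n]

theorem q_le_s : c.q n ≤ c.s n :=
  Nat.le_self_pow (by have := c.five_le_exponent; lia) _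

theorem s_pos : 0 < c.s n :=
  (c.q_pos n).trans_le (c.q_le_s n)

theorem s_mul_q_pow : c.s n * c.q n ^ 3 = c.q (n + 1) := by
  rw [s, ← pow_add, q_succ, Nat.sub_add_cancel (by linarith [c.five_le_exponent])]

theorem two_mul_add_two_le_Q : 2 * (c.B + 2) ≤ c.Q :=
  calc 2 * (c.B + 2) ≤ (2 * (c.B + 2)) ^ K :=
        Nat.le_self_pow (Nat.one_le_iff_ne_zero.1 c.one_le_order) _
    _ ≤ K ! * (2 * (c.B + 2)) ^ K := Nat.le_mul_of_pos_left _ K.factorial_pos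
    _ ≤ c.Q := c.factorial_mul_pow_le

theorem thousand_le_q_cast : (1000 : ℝ) ≤ c.q n :=
  mod_cast c.thousand_le_q n

theorem one_le_q_cast : (1 : ℝ) ≤ c.q n := by
  linarith [c.thousand_le_q_cast n]

theorem q_cast_pos : (0 : ℝ) < c.q n := by
  linarith [c.thousand_le_q_cast n]

theorem s_cast_pos : (0 : ℝ) < c.s n :=
  mod_cast c.s_pos n

theorem two_le_s_cast : (2 : ℝ) ≤ c.s n := by
  linarith [c.thousand_le_q_cast n, show (c.q n : ℝ) ≤ c.s n from mod_cast c.q_le_s n]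

theorem s_mul_q_pow_cast : (c.s n : ℝ) * c.q n ^ 3 = c.q (n + 1) :=
  mod_cast c.s_mul_q_pow n

theorem derivBound_sawtooth : DerivBound ℝ K (1 + c.B * c.s n) (sawtooth (c.q n) (c.s n)) :=
  c.derivBound_smoothTransition.sawtooth c.B.cast_nonneg (c.two_le_s_cast n) (c.one_le_q_cast n)

/-- The horizontal displacement of the `n`-th double shear of the plane. -/
noncomputable def planarSawtooth : C(ℝ, ℝ) :=
  ⟨sawtooth (c.q n) (c.s n), (c.derivBound_sawtooth n).contDiff.continuous⟩

/-- The `n`-th conjugation of the plane, a lift of the `n`-th conjugation of the torus. -/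
noncomputable def planarH : ℝ × ℝ ≃ₜ ℝ × ℝ :=
  conjugation c.q c.planarSawtooth n

theorem shear_bound_le :
    (1 + c.q n : ℝ) * (1 + (1 + c.B * c.s n)) ≤ 2 * (c.B + 2) * c.q n ^ (d - 2) := by
  have hq := c.one_le_q_cast n
  have hs := c.two_le_s_cast n
  have hpow : (c.q n : ℝ) ^ (d - 2) = c.q n * c.s n := by
    rw [s, Nat.cast_pow, ← pow_succ']
    congr 1
    have := c.five_le_exponent
    lia
  calc (1 + c.q n : ℝ) * (1 + (1 + c.B * c.s n))
      ≤ (2 * c.q n) * ((c.B + 2) * c.s n) := by gcongr <;> linarith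
    _ = 2 * (c.B + 2) * c.q n ^ (d - 2) := by rw [hpow]; ring

theorem derivBound_doubleShear :
    DerivBound ℝ K (2 * (c.B + 2) * c.q n ^ (d - 2))
      (doubleShear (c.q n) (c.planarSawtooth n)) :=
  ((c.derivBound_sawtooth n).doubleShear (by positivity) (g := c.planarSawtooth n) (c.q n)).mono
    (by positivity) (c.shear_bound_le n)

theorem derivBound_doubleShear_symm :
    DerivBound ℝ K (2 * (c.B + 2) * c.q n ^ (d - 2))
      (doubleShear (c.q n) (c.planarSawtooth n)).symm :=
  ((c.derivBound_sawtooth n).doubleShear_symm (by positivity) (g := c.planarSawtooth n)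
    (c.q n)).mono (by positivity) (c.shear_bound_le n)

theorem factorial_mul_pow_le_q_cast : (K ! : ℝ) * (2 * (c.B + 2)) ^ K ≤ c.q n :=
  mod_cast c.factorial_mul_pow_le.trans (c.Q_le_q n)

theorem derivBound_planarH : DerivBound ℝ K (c.q n ^ 2) (c.planarH n) := by
  induction n with
  | zero => exact DerivBound.id.mono zero_le_one (one_le_pow₀ (c.one_le_q_cast 0))
  | succ n ih =>
    have hq := c.one_le_q_cast n
    refine (ih.comp (c.derivBound_doubleShear n) (by positivity) (one_le_pow₀ hq)).mono
      (by positivity) ?_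
    calc (K ! : ℝ) * (c.q n ^ 2) ^ K * (2 * (c.B + 2) * c.q n ^ (d - 2))
        = (K ! * (2 * (c.B + 2))) * (c.q n ^ (2 * K) * c.q n ^ (d - 2)) := by
          rw [← pow_mul]; ring
      _ ≤ (K ! * (2 * (c.B + 2)) ^ K) * (c.q n ^ (2 * K) * c.q n ^ (d - 2)) := by
          gcongr
          exact le_self_pow₀ (by linarith [show (0 : ℝ) ≤ c.B from c.B.cast_nonneg])
            (Nat.one_le_iff_ne_zero.1 c.one_le_order)
      _ ≤ c.q n * (c.q n ^ (2 * K) * c.q n ^ (d - 2)) := by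
          gcongr
          exact c.factorial_mul_pow_le_q_cast n
      _ = c.q n ^ (1 + (2 * K + (d - 2))) := by rw [pow_add _ 1, pow_add, pow_one]
      _ ≤ c.q n ^ (d * 2) := pow_le_pow_right₀ hq (by nlinarith [c.le_exponent, Nat.sub_le d 2])
      _ = c.q (n + 1) ^ 2 := by rw [q_succ, Nat.cast_pow, pow_mul]

theorem derivBound_planarH_symm : DerivBound ℝ K (c.q n ^ K) (c.planarH n).symm := by
  induction n with
  | zero => exact DerivBound.id.mono zero_le_one (one_le_pow₀ (c.one_le_q_cast 0))
  | succ n ih =>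
    have hq := c.one_le_q_cast n
    have hstep : (1 : ℝ) ≤ 2 * (c.B + 2) * c.q n ^ (d - 2) :=
      one_le_mul_of_one_le_of_one_le (by linarith [show (0 : ℝ) ≤ c.B from c.B.cast_nonneg])
        (one_le_pow₀ hq)
    refine ((c.derivBound_doubleShear_symm n).comp ih (by positivity) hstep).mono
      (by positivity) ?_
    calc (K ! : ℝ) * (2 * (c.B + 2) * c.q n ^ (d - 2)) ^ K * c.q n ^ K
        = (K ! * (2 * (c.B + 2)) ^ K) * (c.q n ^ ((d - 2) * K) * c.q n ^ K) := by
          rw [mul_pow, ← pow_mul]; ring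
      _ ≤ c.q n * (c.q n ^ ((d - 2) * K) * c.q n ^ K) := by
          gcongr
          exact c.factorial_mul_pow_le_q_cast n
      _ = c.q n ^ (1 + ((d - 2) * K + K)) := by rw [pow_add _ 1, pow_add, pow_one]
      _ ≤ c.q n ^ (d * K) := pow_le_pow_right₀ hq (by
          obtain ⟨e, rfl⟩ := Nat.exists_eq_add_of_le c.five_le_exponent
          rw [show 5 + e - 2 = e + 3 by lia]
          nlinarith [c.one_le_order])
      _ = c.q (n + 1) ^ K := by rw [q_succ, Nat.cast_pow, pow_mul]

end Params

end Params

section Circle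

theorem coe_intCast_eq_zero (m : ℤ) : ((m : ℝ) : Torus1) = 0 :=
  AddCircle.coe_eq_zero_iff 1 |>.2 ⟨m, by simp⟩

theorem exists_coe_eq_dist_eq (x y : Torus1) :
    ∃ a b : ℝ, ↑a = x ∧ ↑b = y ∧ dist x y = |a - b| := by
  obtain ⟨b, rfl⟩ := QuotientAddGroup.mk_surjective y
  obtain ⟨a, rfl⟩ := QuotientAddGroup.mk_surjective x
  refine ⟨a - round (a - b), b, ?_, rfl, ?_⟩
  · rw [AddCircle.coe_sub, coe_intCast_eq_zero, sub_zero]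
  · rw [dist_eq_norm]
    exact (UnitAddCircle.norm_eq (x := a - b)).trans (by rw [sub_right_comm])

theorem norm_coe_le (a : ℝ) : ‖(a : Torus1)‖ ≤ |a| :=
  QuotientAddGroup.norm_mk_le_norm

theorem dist_le_of_semiconj_coe {f : ℝ → ℝ} {F : Torus1 → Torus1} {C : ℝ}
    (hF : Function.Semiconj (fun a : ℝ => (a : Torus1)) f F)
    (hf : ∀ a b, |f a - f b| ≤ C * |a - b|) (x y : Torus1) :
    dist (F x) (F y) ≤ C * dist x y := by
  obtain ⟨a, b, rfl, rfl, hab⟩ := exists_coe_eq_dist_eq x y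
  rw [hab, ← hF a, ← hF b, dist_eq_norm, ← AddCircle.coe_sub]
  exact (norm_coe_le _).trans (hf a b)

end Circle

section ConjTranslation

variable {A : Type*} [AddCommGroup A] [TopologicalSpace A] [IsTopologicalAddGroup A]

/-- The conjugate `h ∘ (· + a) ∘ h⁻¹` of a translation by a homeomorphism. -/
def conjTranslation (h : A ≃ₜ A) (a : A) : A ≃ₜ A :=
  h * Homeomorph.addRight a * h⁻¹

theorem addRight_zpow_apply (a : A) (i : ℤ) (z : A) :
    (Homeomorph.addRight a ^ i) z = z + i • a := by
  induction i generalizing z with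
  | zero => simp
  | succ i ih =>
    rw [zpow_add_one, Homeomorph.mul_apply, ih, Homeomorph.coe_addRight, add_one_zsmul, add_assoc,
      add_comm a]
  | pred i ih =>
    rw [zpow_sub_one, Homeomorph.mul_apply, ih, Homeomorph.inv_apply,
      Homeomorph.addRight_symm, Homeomorph.coe_addRight, sub_one_zsmul, add_assoc, add_comm (-a)]

theorem conjTranslation_zpow_apply (h : A ≃ₜ A) (a : A) (i : ℤ) (z : A) :
    (conjTranslation h a ^ i) z = h (h.symm z + i • a) := by
  rw [conjTranslation, conj_zpow, Homeomorph.mul_apply, Homeomorph.mul_apply, addRight_zpow_apply,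
    Homeomorph.inv_apply]

theorem conjTranslation_mul_doubleShear (h : A × A ≃ₜ A × A) (q : ℕ) (g : C(A, A)) (t : A) :
    conjTranslation (h * doubleShear q g) (t, 0) = conjTranslation h (t, -(q • t)) := by
  ext1 z
  exact congrArg h (doubleShear_symm_add q g (h.symm z) t)

end ConjTranslation

theorem dist_doubleShear_le {A : Type*} [SeminormedAddCommGroup A] {q : ℕ} (hq : 1 ≤ q)
    {g : C(A, A)} {G : ℝ} (hg : ∀ x y, dist (g x) (g y) ≤ G * dist x y) (p p' : A × A) :
    dist (doubleShear q g p) (doubleShear q g p') ≤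
      q * dist p.1 p'.1 + (1 + q * G) * dist p.2 p'.2 := by
  have hq' : (1 : ℝ) ≤ q := mod_cast hq
  have h₂ : 0 ≤ dist p.2 p'.2 := dist_nonneg
  have hfst : dist (p.1 + g p.2) (p'.1 + g p'.2) ≤ dist p.1 p'.1 + G * dist p.2 p'.2 :=
    (dist_add_add_le _ _ _ _).trans (by gcongr; exact hg _ _)
  have hfst_le := mul_le_mul_of_nonneg_left hfst (zero_le_one.trans hq')
  refine max_le ?_ ?_
  · have := le_mul_of_one_le_left (dist_nonneg (x := p.1 + g p.2) (y := p'.1 + g p'.2)) hq'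
    simp only [doubleShear_apply]
    linarith
  · have hsmul := norm_nsmul_le (n := q) (a := p.1 + g p.2 - (p'.1 + g p'.2))
    rw [smul_sub, ← dist_eq_norm, ← dist_eq_norm] at hsmul
    have := dist_sub_sub_le p.2 (q • (p.1 + g p.2)) p'.2 (q • (p'.1 + g p'.2))
    simp only [doubleShear_apply]
    linarith

namespace Params

variable {K d : ℕ} (c : Params K d) (n : ℕ)

theorem abs_sawtooth_sub_le (a b : ℝ) :
    |sawtooth (c.q n) (c.s n) a - sawtooth (c.q n) (c.s n) b| ≤
      (1 + c.B * c.s n) / c.q n * |a - b| := by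
  have hstair := (c.derivBound_smoothTransition.smoothStair c.B.cast_nonneg
    (c.two_le_s_cast n)).dist_le c.one_le_order a b
  rw [Real.dist_eq, Real.dist_eq] at hstair
  rw [sawtooth, sawtooth, ← sub_div, abs_div, Nat.abs_cast, div_mul_eq_mul_div]
  gcongr
  calc |a - smoothStair (c.s n) a - (b - smoothStair (c.s n) b)|
      = |(a - b) - (smoothStair (c.s n) a - smoothStair (c.s n) b)| := by ring_nf
    _ ≤ |a - b| + c.B * c.s n * |a - b| := (abs_sub _ _).trans (by gcongr)
    _ = (1 + c.B * c.s n) * |a - b| := by ring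

theorem periodic_coe_sawtooth :
    Function.Periodic (fun y : ℝ => (sawtooth (c.q n) (c.s n) y : Torus1)) 1 :=
  (sawtooth_periodic _ _).comp _

/-- The horizontal displacement of the `n`-th double shear of the torus. -/
noncomputable def circleSawtooth : C(Torus1, Torus1) where
  toFun := (c.periodic_coe_sawtooth n).lift
  continuous_toFun := continuous_coinduced_dom.2
    ((AddCircle.continuous_mk' 1).comp (c.planarSawtooth n).continuous)

theorem semiconj_circleSawtooth :
    Function.Semiconj (fun a : ℝ => (a : Torus1)) (c.planarSawtooth n) (c.circleSawtooth n) :=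
  fun _ => rfl

theorem dist_circleSawtooth_le (x y : Torus1) :
    dist (c.circleSawtooth n x) (c.circleSawtooth n y) ≤
      (1 + c.B * c.s n) / c.q n * dist x y :=
  dist_le_of_semiconj_coe (c.semiconj_circleSawtooth n) (c.abs_sawtooth_sub_le n) x y

theorem norm_circleSawtooth_le (x : Torus1) : ‖c.circleSawtooth n x‖ ≤ 1 / c.q n := by
  obtain ⟨a, rfl⟩ := QuotientAddGroup.mk_surjective x
  exact (norm_coe_le _).trans (abs_sawtooth_le (c.q n).cast_nonneg _ a)

/-- The `n`-th conjugation of the torus. -/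
noncomputable def H : Torus2 ≃ₜ Torus2 :=
  conjugation c.q c.circleSawtooth n

theorem H_succ : c.H (n + 1) = c.H n * doubleShear (c.q n) (c.circleSawtooth n) :=
  rfl

theorem semiconj_H : Function.Semiconj torusProj (c.planarH n) (c.H n) :=
  semiconj_conjugation (QuotientAddGroup.mk' _) c.q c.semiconj_circleSawtooth n

theorem dist_doubleShear_le_add (z w : Torus2) :
    dist (doubleShear (c.q n) (c.circleSawtooth n) z)
        (doubleShear (c.q n) (c.circleSawtooth n) w) ≤
      c.q n * dist z.1 w.1 + (c.B + 1) * c.s n * dist z.2 w.2 := by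
  refine (dist_doubleShear_le (c.q_pos n) (c.dist_circleSawtooth_le n) z w).trans ?_
  rw [mul_div_cancel₀ _ (c.q_cast_pos n).ne']
  gcongr
  linarith [c.two_le_s_cast n]

theorem dist_doubleShear_le_mul (z w : Torus2) :
    dist (doubleShear (c.q n) (c.circleSawtooth n) z)
        (doubleShear (c.q n) (c.circleSawtooth n) w) ≤
      (c.B + 2) * c.s n * dist z w :=
  calc _ ≤ c.q n * dist z.1 w.1 + (c.B + 1) * c.s n * dist z.2 w.2 :=
        c.dist_doubleShear_le_add n z w
    _ ≤ c.s n * dist z w + (c.B + 1) * c.s n * dist z w := by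
        gcongr
        exacts [c.q_le_s n, le_max_left _ _, le_max_right _ _]
    _ = (c.B + 2) * c.s n * dist z w := by ring

theorem dist_H_succ_le_of_dist_H_le
    (hn : ∀ z w, dist (c.H n z) (c.H n w) ≤ c.q n * dist z w) (z w : Torus2) :
    dist (c.H (n + 1) z) (c.H (n + 1) w) ≤ c.q (n + 1) / c.q n * dist z w := by
  have hB : (c.B + 2 : ℝ) ≤ c.q n :=
    mod_cast (by linarith [c.two_mul_add_two_le_Q, c.Q_le_q n] : c.B + 2 ≤ c.q n)
  have hq := (c.q_cast_pos n).ne'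
  calc _ ≤ c.q n * ((c.B + 2) * c.s n * dist z w) :=
        (hn _ _).trans (by gcongr; exact c.dist_doubleShear_le_mul n z w)
    _ ≤ c.q n * (c.q n * c.s n * dist z w) := by gcongr
    _ = c.q (n + 1) / c.q n * dist z w := by rw [← c.s_mul_q_pow_cast n]; field_simp

theorem dist_H_le (z w : Torus2) : dist (c.H n z) (c.H n w) ≤ c.q n * dist z w := by
  induction n generalizing z w with
  | zero => exact le_mul_of_one_le_left dist_nonneg (c.one_le_q_cast 0)
  | succ n ih =>
    refine (c.dist_H_succ_le_of_dist_H_le n ih z w).trans ?_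
    gcongr
    exact div_le_self (c.q (n + 1)).cast_nonneg (c.one_le_q_cast n)

theorem dist_H_succ_le (z w : Torus2) :
    dist (c.H (n + 1) z) (c.H (n + 1) w) ≤ c.q (n + 1) / c.q n * dist z w :=
  c.dist_H_succ_le_of_dist_H_le n (c.dist_H_le n) z w

/-- The rotation number of stage `n`. -/
noncomputable def alpha : ℝ :=
  ∑ k ∈ Finset.range n, 1 / (c.q (k + 1) : ℝ)

theorem alpha_succ : c.alpha (n + 1) = c.alpha n + 1 / c.q (n + 1) :=
  Finset.sum_range_succ _ n

theorem q_dvd_q_succ : c.q n ∣ c.q (n + 1) :=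
  ⟨c.s n * c.q n ^ 2, by rw [← s_mul_q_pow]; ring⟩

theorem exists_int_eq_q_mul_alpha : ∃ m : ℤ, (c.q n : ℝ) * c.alpha n = m := by
  induction n with
  | zero => exact ⟨0, by simp [alpha]⟩
  | succ n ih =>
    obtain ⟨m, hm⟩ := ih
    obtain ⟨a, ha⟩ := c.q_dvd_q_succ n
    refine ⟨a * m + 1, ?_⟩
    have hq := (c.q_cast_pos (n + 1)).ne'
    rw [alpha_succ, mul_add, mul_one_div_cancel hq, ha]
    push_cast
    rw [← hm]
    ring

theorem nsmul_coe_alpha : c.q n • (c.alpha n : Torus1) = 0 := by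
  obtain ⟨m, hm⟩ := c.exists_int_eq_q_mul_alpha n
  rw [← AddCircle.coe_nsmul, nsmul_eq_mul, hm, coe_intCast_eq_zero]

/-- The periodic approximation of stage `n`. -/
noncomputable def S : Torus2 ≃ₜ Torus2 :=
  conjTranslation (c.H n) (c.alpha n, 0)

theorem S_zpow_apply (i : ℤ) (z : Torus2) :
    (c.S n ^ i) z = c.H n ((c.H n).symm z + i • ((c.alpha n : Torus1), (0 : Torus1))) :=
  conjTranslation_zpow_apply _ _ i z

/-- The translation to which `S (n + 1)` is conjugate by the conjugation of stage `n`. -/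
noncomputable def drift : ℝ × ℝ :=
  (c.alpha (n + 1), -(c.q n / c.q (n + 1)))

theorem torusProj_drift :
    torusProj (c.drift n) = (↑(c.alpha (n + 1)), -(c.q n • (c.alpha (n + 1) : Torus1))) := by
  rw [alpha_succ, AddCircle.coe_add, smul_add, nsmul_coe_alpha, zero_add, ← AddCircle.coe_nsmul,
    nsmul_eq_mul, mul_one_div, drift, alpha_succ]
  rfl

theorem S_succ_eq_conjTranslation :
    c.S (n + 1) = conjTranslation (c.H n) (torusProj (c.drift n)) := by
  rw [S, H_succ, conjTranslation_mul_doubleShear, torusProj_drift]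

theorem S_succ_zpow_apply (i : ℤ) (z : Torus2) :
    (c.S (n + 1) ^ i) z = c.H n ((c.H n).symm z + i • torusProj (c.drift n)) := by
  rw [S_succ_eq_conjTranslation, conjTranslation_zpow_apply]

theorem norm_drift_sub_le : ‖c.drift n - (c.alpha n, 0)‖ ≤ c.q n / c.q (n + 1) := by
  rw [drift, alpha_succ, Prod.mk_sub_mk, add_sub_cancel_left, sub_zero, Prod.norm_mk, norm_neg,
    Real.norm_of_nonneg (by positivity), Real.norm_of_nonneg (by positivity)]
  refine max_le ?_ le_rfl
  gcongr
  exact c.one_le_q_cast n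

theorem norm_torusProj_drift_sub_le :
    ‖torusProj (c.drift n) - ((c.alpha n : Torus1), (0 : Torus1))‖ ≤ c.q n / c.q (n + 1) := by
  refine le_trans (max_le_max ?_ ?_) (c.norm_drift_sub_le n)
  · exact (congrArg norm (AddCircle.coe_sub _ _ _)).ge.trans (norm_coe_le _)
  · rw [Prod.snd_sub, Prod.snd_sub, sub_zero, sub_zero]
    exact norm_coe_le _

/-- The distance between consecutive periodic approximations is at most `delta n`. -/
noncomputable def delta : ℝ :=
  c.q n ^ 2 / c.q (n + 1)

theorem delta_nonneg : 0 ≤ c.delta n := by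
  unfold delta
  positivity

theorem dist_S_zpow_le (i : ℤ) (z : Torus2) :
    dist ((c.S n ^ i) z) ((c.S (n + 1) ^ i) z) ≤ |(i : ℝ)| * c.delta n := by
  rw [S_zpow_apply, S_succ_zpow_apply, dist_comm]
  have hnorm := norm_zsmul_le i (torusProj (c.drift n) - ((c.alpha n : Torus1), (0 : Torus1)))
  calc _ ≤ c.q n * dist (i • torusProj (c.drift n)) (i • ((c.alpha n : Torus1), (0 : Torus1))) :=
        (c.dist_H_le n _ _).trans_eq (by rw [dist_add_left])
    _ ≤ c.q n * (|(i : ℝ)| * (c.q n / c.q (n + 1))) := by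
        rw [dist_eq_norm, ← smul_sub]
        gcongr
        refine hnorm.trans ?_
        rw [Int.norm_eq_abs]
        gcongr
        exact c.norm_torusProj_drift_sub_le n
    _ = |(i : ℝ)| * c.delta n := by rw [delta]; ring

theorem delta_le : c.delta n ≤ 1 / c.q n ^ 3 := by
  have hq := c.q_cast_pos n
  rw [delta, q_succ, Nat.cast_pow, div_le_div_iff₀ (by positivity) (by positivity), one_mul,
    ← pow_add]
  exact pow_le_pow_right₀ (c.one_le_q_cast n) c.five_le_exponent

theorem two_mul_delta_succ_le : 2 * c.delta (n + 1) ≤ c.delta n := by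
  have hq := c.thousand_le_q_cast (n + 1)
  calc 2 * c.delta (n + 1) ≤ 2 * (1 / c.q (n + 1) ^ 3) := by
        gcongr
        exact c.delta_le (n + 1)
    _ ≤ 1 / c.q (n + 1) := by
        rw [mul_one_div, div_le_div_iff₀ (by positivity) (by positivity)]
        nlinarith [show (2 : ℝ) ≤ c.q (n + 1) ^ 2 by nlinarith]
    _ ≤ c.delta n := by
        unfold delta
        gcongr
        exact one_le_pow₀ (c.one_le_q_cast n)

theorem exists_homeomorph_dist_zpow_le :
    ∃ T : Torus2 ≃ₜ Torus2,
      ∀ n (i : ℤ) z, dist ((c.S n ^ i) z) ((T ^ i) z) ≤ |(i : ℝ)| * (2 * c.delta n) :=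
  AnosovKatok.exists_homeomorph_dist_zpow_le c.two_mul_delta_succ_le c.delta_nonneg c.S
    c.dist_S_zpow_le

/-- The diffeomorphism of the theorem, the limit of the periodic approximations. -/
noncomputable def T : Torus2 ≃ₜ Torus2 :=
  c.exists_homeomorph_dist_zpow_le.choose

theorem dist_S_zpow_T_zpow_le (i : ℤ) (z : Torus2) :
    dist ((c.S n ^ i) z) ((c.T ^ i) z) ≤ |(i : ℝ)| * (2 * c.delta n) :=
  c.exists_homeomorph_dist_zpow_le.choose_spec n i z

theorem tendsto_delta : Tendsto c.delta atTop (𝓝 0) :=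
  (summable_of_halving c.two_mul_delta_succ_le c.delta_nonneg).tendsto_atTop_zero

theorem tendsto_S_zpow (i : ℤ) (z : Torus2) :
    Tendsto (fun n => (c.S n ^ i) z) atTop (𝓝 ((c.T ^ i) z)) := by
  refine (tendstoUniformly_of_dist_le ?_ fun n z => c.dist_S_zpow_T_zpow_le n i z).tendsto_at z
  simpa using (c.tendsto_delta.const_mul 2).const_mul |(i : ℝ)|

end Params

section Lifts

theorem torusProj_add (p p' : ℝ × ℝ) : torusProj (p + p') = torusProj p + torusProj p' :=
  rfl

theorem torusProj_sub (p p' : ℝ × ℝ) : torusProj (p - p') = torusProj p - torusProj p' :=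
  rfl

theorem torusProj_zsmul (i : ℤ) (p : ℝ × ℝ) : torusProj (i • p) = i • torusProj p :=
  rfl

theorem continuous_torusProj : Continuous torusProj :=
  (AddCircle.continuous_mk' 1).prodMap (AddCircle.continuous_mk' 1)

end Lifts

namespace Params

open scoped Nat

section Increment

variable {K d : ℕ} (c : Params K d) (n : ℕ) (i : ℤ)

theorem semiconj_H_symm : Function.Semiconj torusProj (c.planarH n).symm (c.H n).symm :=
  fun p => (c.H n).injective <| by
    rw [← c.semiconj_H n, Homeomorph.apply_symm_apply, Homeomorph.apply_symm_apply]

/-- The difference of the lifts of `S (n + 1) ^ i` and `S n ^ i`. -/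
noncomputable def liftIncrement (p : ℝ × ℝ) : ℝ × ℝ :=
  c.planarH n ((c.planarH n).symm p + i • c.drift n) -
    c.planarH n ((c.planarH n).symm p + i • (c.alpha n, 0))

theorem contDiff_liftIncrement : ContDiff ℝ K (c.liftIncrement n i) := by
  have hH := (c.derivBound_planarH n).contDiff
  have hHi := (c.derivBound_planarH_symm n).contDiff
  exact (hH.comp (hHi.add contDiff_const)).sub (hH.comp (hHi.add contDiff_const))

theorem torusProj_add_sum_liftIncrement (p : ℝ × ℝ) :
    torusProj (p + ∑ k ∈ Finset.range n, c.liftIncrement k i p) = (c.S n ^ i) (torusProj p) := by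
  induction n with
  | zero =>
    have h0 : c.H 0 = 1 := rfl
    rw [S_zpow_apply, h0, alpha, Finset.sum_range_zero, Finset.sum_range_zero, add_zero]
    exact (add_zero _).symm.trans (congrArg _ (smul_zero i).symm)
  | succ n ih =>
    rw [Finset.sum_range_succ, ← add_assoc, torusProj_add, ih, liftIncrement, torusProj_sub,
      c.semiconj_H, c.semiconj_H, torusProj_add, torusProj_add, c.semiconj_H_symm,
      S_succ_zpow_apply, S_zpow_apply, torusProj_zsmul, torusProj_zsmul]
    exact add_sub_cancel _ _

theorem two_mul_inv_q_succ_le : 2 * (1 / (c.q (n + 1) : ℝ)) ≤ 1 / c.q n := by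
  have := c.thousand_le_q_cast n
  have : (2 * c.q n : ℝ) ≤ c.q (n + 1) := by
    rw [q_succ, Nat.cast_pow]
    calc (2 * c.q n : ℝ) ≤ c.q n ^ 2 := by nlinarith
      _ ≤ c.q n ^ d := pow_le_pow_right₀ (c.one_le_q_cast n) (by linarith [c.five_le_exponent])
  rw [mul_one_div, div_le_div_iff₀ (c.q_cast_pos _) (c.q_cast_pos _), one_mul]
  exact this

theorem summable_inv_q : Summable fun n => 1 / (c.q n : ℝ) :=
  summable_of_halving c.two_mul_inv_q_succ_le fun n => by positivity

end Increment

variable {r d : ℕ} (c : Params (r + 1) d) (n : ℕ) (i : ℤ)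

theorem norm_iteratedFDeriv_liftIncrement_le {j : ℕ} (hj : j ≤ r) (p : ℝ × ℝ) :
    ‖iteratedFDeriv ℝ j (c.liftIncrement n i) p‖ ≤ |(i : ℝ)| * (1 / c.q n) := by
  have hq := c.one_le_q_cast n
  have hshift : ‖i • c.drift n - i • (c.alpha n, (0 : ℝ))‖ ≤
      |(i : ℝ)| * (c.q n / c.q (n + 1)) := by
    rw [← smul_sub]
    refine (norm_zsmul_le i _).trans ?_
    rw [Int.norm_eq_abs]
    gcongr
    exact c.norm_drift_sub_le n
  have hexp : 1 + 2 * (j + 1) + 1 + (r + 1) * j + 1 ≤ d := by nlinarith [c.le_exponent]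
  have hfact : (j ! : ℝ) ≤ c.q n := by
    refine le_trans ?_ (c.factorial_mul_pow_le_q_cast n)
    rw [← mul_one (j ! : ℝ)]
    gcongr
    · lia
    · exact one_le_pow₀ (by linarith [show (0 : ℝ) ≤ c.B from c.B.cast_nonneg])
  calc _ ≤ j ! * ((c.q n ^ 2) ^ (j + 1) * ‖i • c.drift n - i • (c.alpha n, (0 : ℝ))‖) *
          (c.q n ^ (r + 1)) ^ j :=
        ((c.derivBound_planarH n).of_le (by lia)).norm_iteratedFDeriv_comp_translate_sub_le
          (one_le_pow₀ hq) ((c.derivBound_planarH_symm n).of_le (by lia)) _ _ p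
    _ ≤ c.q n * ((c.q n ^ 2) ^ (j + 1) * (|(i : ℝ)| * (c.q n / c.q (n + 1)))) *
          (c.q n ^ (r + 1)) ^ j := by gcongr
    _ = |(i : ℝ)| * (c.q n ^ (1 + 2 * (j + 1) + 1 + (r + 1) * j) / c.q n ^ d) := by
        rw [q_succ, Nat.cast_pow]
        ring
    _ ≤ |(i : ℝ)| * (1 / c.q n) := by
        refine mul_le_mul_of_nonneg_left ?_ (abs_nonneg _)
        have := c.q_cast_pos n
        rw [div_le_div_iff₀ (by positivity) (by positivity), one_mul, ← pow_succ]
        exact pow_le_pow_right₀ hq hexp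

theorem summable_abs_mul_inv_q : Summable fun n => |(i : ℝ)| * (1 / (c.q n : ℝ)) :=
  c.summable_inv_q.mul_left _

theorem summable_liftIncrement (p : ℝ × ℝ) : Summable fun n => c.liftIncrement n i p :=
  (c.summable_abs_mul_inv_q i).of_norm_bounded fun n => by
    simpa only [norm_iteratedFDeriv_zero] using
      c.norm_iteratedFDeriv_liftIncrement_le n i (Nat.zero_le r) p

theorem exists_contDiff_isLiftOf :
    ∃ F : ℝ × ℝ → ℝ × ℝ, ContDiff ℝ (r : ℕ∞) F ∧ IsLiftOf F (c.T ^ i : Torus2 ≃ₜ Torus2) := by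
  refine ⟨fun p => p + ∑' n, c.liftIncrement n i p, contDiff_id.add ?_, fun p => ?_⟩
  · refine contDiff_tsum (v := fun _ n => |(i : ℝ)| * (1 / (c.q n : ℝ)))
      (fun n => (c.contDiff_liftIncrement n i).of_le (mod_cast r.le_succ))
      (fun _ _ => c.summable_abs_mul_inv_q i) fun j n p hj =>
        c.norm_iteratedFDeriv_liftIncrement_le n i (mod_cast hj) p
  · refine tendsto_nhds_unique (((continuous_torusProj.tendsto _).comp
      ((c.summable_liftIncrement i p).hasSum.tendsto_sum_nat.const_add p))) ?_
    exact (c.tendsto_S_zpow i (torusProj p)).congr fun n =>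
      (c.torusProj_add_sum_liftIncrement n i p).symm

theorem isCkTorusDiffeo_T : IsCkTorusDiffeo r c.T := by
  have hinv : Function.invFun c.T = (c.T ^ (-1 : ℤ) : Torus2 ≃ₜ Torus2) := by
    rw [zpow_neg_one]
    exact Function.invFun_eq_of_injective_of_rightInverse c.T.injective c.T.apply_symm_apply
  refine ⟨c.T.bijective, ?_, hinv ▸ c.exists_contDiff_isLiftOf (-1)⟩
  simpa only [zpow_one] using c.exists_contDiff_isLiftOf 1

end Params

section InvariantMeasures

theorem dist_birkhoffAverage_le {X : Type*} {T S : X → X} {f : X → ℝ} {n : ℕ} {x y : X} {ε : ℝ}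
    (hε : 0 ≤ ε) (h : ∀ k < n, dist (f (T^[k] x)) (f (S^[k] y)) ≤ ε) :
    dist (birkhoffAverage ℝ T f n x) (birkhoffAverage ℝ S f n y) ≤ ε := by
  have hsum : dist (birkhoffSum T f n x) (birkhoffSum S f n y) ≤ ε * n :=
    (dist_sum_sum_le _ _ _).trans <|
      (Finset.sum_le_sum fun k hk => h k (Finset.mem_range.1 hk)).trans_eq (by simp [mul_comm])
  rw [birkhoffAverage, birkhoffAverage, dist_smul₀, norm_inv, Real.norm_natCast, inv_mul_eq_div]
  exact div_le_of_le_mul₀ n.cast_nonneg hε hsum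

variable {X Y : Type*} [MeasurableSpace X] {μ : Measure X}

theorem measurePreserving_of_tendsto [TopologicalSpace Y] [MeasurableSpace Y] [BorelSpace Y]
    [HasOuterApproxClosed Y] [IsFiniteMeasure μ] {ν : Measure Y} [IsFiniteMeasure ν]
    {g : ℕ → X → Y} {G : X → Y} (hg : ∀ n, MeasurePreserving (g n) μ ν) (hG : Measurable G)
    (hlim : ∀ x, Tendsto (fun n => g n x) atTop (𝓝 (G x))) : MeasurePreserving G μ ν := by
  refine ⟨hG, ext_of_forall_integral_eq_of_IsFiniteMeasure fun f => ?_⟩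
  have hf := f.continuous.measurable
  have hconv : Tendsto (fun n => ∫ x, f (g n x) ∂μ) atTop (𝓝 (∫ x, f (G x) ∂μ)) :=
    tendsto_integral_of_dominated_convergence (fun _ => ‖f‖)
      (fun n => (hf.comp (hg n).measurable).aestronglyMeasurable) (integrable_const _)
      (fun n => .of_forall fun x => f.norm_coe_le_norm _)
      (.of_forall fun x => (f.continuous.tendsto _).comp (hlim x))
  have hconst : ∀ n, ∫ x, f (g n x) ∂μ = ∫ y, f y ∂ν := fun n => by
    rw [← (hg n).map_eq, integral_map (hg n).aemeasurable hf.aestronglyMeasurable]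
  rw [integral_map hG.aemeasurable hf.aestronglyMeasurable]
  simp only [hconst] at hconv
  exact tendsto_nhds_unique hconv tendsto_const_nhds

theorem integrable_comp_iterate {T : X → X} (hT : MeasurePreserving T μ μ) {f : X → ℝ}
    (hf : Integrable f μ) (k : ℕ) : Integrable (fun x => f (T^[k] x)) μ :=
  (hT.iterate k).integrable_comp_of_integrable hf

theorem integrable_birkhoffAverage {T : X → X} (hT : MeasurePreserving T μ μ) {f : X → ℝ}
    (hf : Integrable f μ) (n : ℕ) : Integrable (birkhoffAverage ℝ T f n) μ :=
  (integrable_finsetSum (Finset.range n) fun k _ => integrable_comp_iterate hT hf k).smul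
    (n : ℝ)⁻¹

theorem integral_birkhoffAverage {T : X → X} (hT : MeasurePreserving T μ μ) {f : X → ℝ}
    (hf : Integrable f μ) {n : ℕ} (hn : n ≠ 0) :
    ∫ x, birkhoffAverage ℝ T f n x ∂μ = ∫ x, f x ∂μ := by
  have hcomp : ∀ k, ∫ x, f (T^[k] x) ∂μ = ∫ x, f x ∂μ := fun k => by
    have hk := hT.iterate k
    conv_rhs => rw [← hk.map_eq]
    rw [integral_map hk.aemeasurable (hk.map_eq.symm ▸ hf.aestronglyMeasurable)]
  simp only [birkhoffAverage, birkhoffSum]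
  rw [integral_smul, integral_finsetSum _ fun k _ => integrable_comp_iterate hT hf k]
  simp [hcomp, hn]

theorem dist_integral_le_of_forall_dist_le [IsProbabilityMeasure μ] {f : X → ℝ}
    (hf : Integrable f μ) {y ε : ℝ} (h : ∀ x, dist y (f x) ≤ ε) : dist y (∫ x, f x ∂μ) ≤ ε := by
  have hsub : y - ∫ x, f x ∂μ = ∫ x, (y - f x) ∂μ := by
    rw [integral_sub (integrable_const _) hf, integral_const, probReal_univ, one_smul]
  rw [dist_eq_norm, hsub]
  simpa using norm_integral_le_of_norm_le_const (μ := μ)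
    (.of_forall fun x => (dist_eq_norm y (f x)).symm.trans_le (h x))

theorem eq_of_dist_birkhoffAverage_le [TopologicalSpace X] [BorelSpace X] [HasOuterApproxClosed X]
    [IsProbabilityMeasure μ] {ν : Measure X} [IsFiniteMeasure ν]
    (h : ∀ f : BoundedContinuousFunction X ℝ, ∀ ε > 0, ∃ R : X → X, MeasurePreserving R μ μ ∧
      ∃ n ≠ 0, ∀ x, dist (birkhoffAverage ℝ R f n x) (∫ x, f x ∂ν) ≤ ε) : μ = ν := by
  refine ext_of_forall_integral_eq_of_IsFiniteMeasure fun f => eq_of_forall_dist_le fun ε hε => ?_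
  obtain ⟨R, hR, n, hn, hclose⟩ := h f ε hε
  have hf : Integrable f μ := f.integrable μ
  rw [← integral_birkhoffAverage hR hf hn, dist_comm]
  exact dist_integral_le_of_forall_dist_le (integrable_birkhoffAverage hR hf n) fun x =>
    (dist_comm _ _).trans_le (hclose x)

end InvariantMeasures

section CyclicTranslation

variable {A : Type*} [SeminormedAddCommGroup A] {v : A} {N : ℕ}

theorem birkhoffAverage_add_right_add_nsmul (hv : N • v = 0) (f : A → ℝ) (x : A) (l : ℕ) :
    birkhoffAverage ℝ (· + v) f N (x + l • v) = birkhoffAverage ℝ (· + v) f N x := by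
  induction l with
  | zero => rw [zero_smul, add_zero]
  | succ l ih =>
    rw [← ih, succ_nsmul, ← add_assoc, ← sub_eq_zero,
      birkhoffAverage_apply_sub_birkhoffAverage (· + v) f N (x + l • v), add_right_iterate, hv]
    simp only [add_zero, sub_self, smul_zero]

theorem dist_birkhoffAverage_add_right_le (hv : N • v = 0) {δ ε : ℝ} (hε : 0 ≤ ε)
    (hdense : ∀ t, ∃ l : ℕ, dist (l • v) t ≤ δ) {f : A → ℝ}
    (hf : ∀ x y, dist x y ≤ δ → dist (f x) (f y) ≤ ε) (x y : A) :
    dist (birkhoffAverage ℝ (· + v) f N x) (birkhoffAverage ℝ (· + v) f N y) ≤ ε := by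
  obtain ⟨l, hl⟩ := hdense (y - x)
  rw [← birkhoffAverage_add_right_add_nsmul hv f x l]
  refine dist_birkhoffAverage_le hε fun k _ => hf _ _ ?_
  rw [dist_eq_norm, sub_sub_eq_add_sub, ← dist_eq_norm] at hl
  rwa [add_right_iterate, dist_add_right, add_comm]

end CyclicTranslation

section MeasurePreserving

instance instIsProbabilityMeasureTorus1 : IsProbabilityMeasure (volume : Measure Torus1) :=
  ⟨by rw [AddCircle.measure_univ, ENNReal.ofReal_one]⟩

instance instIsProbabilityMeasureTorus2 : IsProbabilityMeasure (volume : Measure Torus2) :=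
  inferInstanceAs (IsProbabilityMeasure ((volume : Measure Torus1).prod volume))

instance instIsAddRightInvariantTorus2 : (volume : Measure Torus2).IsAddRightInvariant :=
  inferInstanceAs ((volume : Measure Torus1).prod volume).IsAddRightInvariant

theorem measurePreserving_doubleShear (q : ℕ) (g : C(Torus1, Torus1)) :
    MeasurePreserving (doubleShear q g) volume volume := by
  have hvertical : MeasurePreserving (fun p : Torus2 => (p.1, p.2 - q • p.1)) volume volume :=
    (MeasurePreserving.id volume).skew_product (g := fun x y => y - q • x)
      (by fun_prop) (.of_forall fun x => (measurePreserving_sub_right volume (q • x)).map_eq)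
  have hhorizontal : MeasurePreserving (fun p : Torus2 => (p.1, p.2 + g p.1)) volume volume :=
    (MeasurePreserving.id volume).skew_product (g := fun x y => y + g x)
      (by fun_prop) (.of_forall fun x => (measurePreserving_add_right volume (g x)).map_eq)
  have hswap : MeasurePreserving (Prod.swap : Torus2 → Torus2) volume volume :=
    Measure.measurePreserving_swap
  exact hvertical.comp (hswap.comp (hhorizontal.comp hswap))

theorem measurePreserving_symm {h : Torus2 ≃ₜ Torus2} (hh : MeasurePreserving h volume volume) :
    MeasurePreserving h.symm volume volume :=
  MeasurePreserving.symm h.toMeasurableEquiv hh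

namespace Params

variable {K d : ℕ} (c : Params K d) (n : ℕ)

theorem measurePreserving_H : MeasurePreserving (c.H n) volume volume := by
  induction n with
  | zero => exact MeasurePreserving.id volume
  | succ n ih => exact ih.comp (measurePreserving_doubleShear _ _)

theorem measurePreserving_S_zpow (i : ℤ) : MeasurePreserving (c.S n ^ i) volume volume := by
  rw [funext (c.S_zpow_apply n i)]
  exact (c.measurePreserving_H n).comp ((measurePreserving_add_right _ _).comp
    (measurePreserving_symm (c.measurePreserving_H n)))

theorem measurePreserving_T_zpow (i : ℤ) : MeasurePreserving (c.T ^ i) volume volume :=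
  measurePreserving_of_tendsto (fun n => c.measurePreserving_S_zpow n i)
    (c.T ^ i).continuous.measurable (c.tendsto_S_zpow i)

theorem measurePreserving_T : MeasurePreserving c.T volume volume := by
  simpa only [zpow_one] using c.measurePreserving_T_zpow 1

end Params

end MeasurePreserving

section UniqueErgodicity

theorem homeomorph_coe_pow {X : Type*} [TopologicalSpace X] (T : X ≃ₜ X) (k : ℕ) :
    ⇑(T ^ k) = T^[k] :=
  hom_coe_pow _ rfl (fun _ _ => rfl) T k

theorem birkhoffAverage_conjTranslation {A : Type*} [AddCommGroup A] [TopologicalSpace A]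
    [IsTopologicalAddGroup A] (h : A ≃ₜ A) (a : A) (f : A → ℝ) (n : ℕ) (z : A) :
    birkhoffAverage ℝ (conjTranslation h a) f n z =
      birkhoffAverage ℝ (· + a) (f ∘ h) n (h.symm z) := by
  simp only [birkhoffAverage, birkhoffSum, ← homeomorph_coe_pow, add_right_iterate,
    Function.comp_apply, ← zpow_natCast, conjTranslation_zpow_apply, natCast_zsmul]

theorem torusProj_eq_torusProj {p p' : ℝ × ℝ} {m m' : ℤ} (h : p - p' = ((m : ℝ), (m' : ℝ))) :
    torusProj p = torusProj p' := by
  rw [← sub_eq_zero, ← torusProj_sub, h]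
  exact Prod.ext (coe_intCast_eq_zero m) (coe_intCast_eq_zero m')

theorem norm_torusProj_le (p : ℝ × ℝ) : ‖torusProj p‖ ≤ ‖p‖ :=
  max_le_max (norm_coe_le _) (norm_coe_le _)

theorem exists_nat_abs_div_sub_le {M q : ℕ} (hM : 0 < M) (hq : 0 < q) {x y : ℝ} (hx : 0 ≤ x)
    (hy : y ∈ Ico 0 1) :
    ∃ l a : ℕ, |l / (M * q : ℝ) - x| ≤ 2 / q ∧ |(l / M : ℝ) - a - y| ≤ 1 / M := by
  have hM' : (0 : ℝ) < M := mod_cast hM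
  have hq' : (0 : ℝ) < q := mod_cast hq
  have hr := Nat.floor_le (mul_nonneg hM'.le hy.1)
  have hr' := Nat.lt_floor_add_one (M * y)
  have ha := Nat.floor_le (mul_nonneg hq'.le hx)
  have ha' := Nat.lt_floor_add_one (q * x)
  have hMy : M * y ≤ M := mul_le_of_le_one_right hM'.le hy.2.le
  set r := ⌊M * y⌋₊
  set a := ⌊q * x⌋₊
  refine ⟨M * a + r, a, ?_, ?_⟩ <;> push_cast
  · have hrM : (r / M : ℝ) ≤ 1 := (div_le_one hM').2 (hr.trans hMy)
    have hrM' : (0 : ℝ) ≤ r / M := by positivity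
    have key : (M * a + r) / (M * q : ℝ) - x = (a + r / M - q * x) / q := by field_simp
    rw [key, abs_div, abs_of_pos hq']
    gcongr
    exact abs_le.2 ⟨by linarith, by linarith⟩
  · have key : (M * a + r) / (M : ℝ) - a - y = (r - M * y) / M := by field_simp; ring
    rw [key, abs_div, abs_of_pos hM']
    gcongr
    exact abs_le.2 ⟨by linarith, by linarith⟩

theorem surjective_torusProj : Function.Surjective torusProj :=
  (QuotientAddGroup.mk_surjective).prodMap QuotientAddGroup.mk_surjective

namespace Params

variable {K d : ℕ} (c : Params K d) (n : ℕ)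

/-- The translation to which `S (n + 1) ^ q n` is conjugate by the conjugation of stage `n`. -/
noncomputable def step : Torus2 :=
  torusProj (1 / (c.s n * c.q n ^ 2), -(1 / (c.s n * c.q n)))

theorem nsmul_torusProj_drift : c.q n • torusProj (c.drift n) = c.step n := by
  obtain ⟨m, hm⟩ := c.exists_int_eq_q_mul_alpha n
  have hs := c.s_cast_pos n
  have hq := c.q_cast_pos n
  refine torusProj_eq_torusProj (p := c.q n • c.drift n) (m := m) (m' := 0) ?_
  rw [← hm, drift, alpha_succ, ← s_mul_q_pow_cast]
  ext <;> simp <;> field_simp <;> ring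

theorem nsmul_step : (c.s n * c.q n ^ 2) • c.step n = 0 := by
  have hs := c.s_cast_pos n
  have hq := c.q_cast_pos n
  refine torusProj_eq_torusProj (m := 1) (m' := -(c.q n)) (p' := 0)
    (p := (c.s n * c.q n ^ 2) • ((1 / (c.s n * c.q n ^ 2) : ℝ), (-(1 / (c.s n * c.q n)) : ℝ))) ?_
  ext <;> simp <;> field_simp

theorem exists_dist_nsmul_step_le (t : Torus2) : ∃ l : ℕ, dist (l • c.step n) t ≤ 2 / c.q n := by
  obtain ⟨⟨x, y⟩, rfl⟩ := surjective_torusProj t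
  have hs := c.two_le_s_cast n
  have hq := c.q_cast_pos n
  obtain ⟨l, a, hx, hy⟩ := exists_nat_abs_div_sub_le
    (mul_pos (c.s_pos n) (c.q_pos n)) (c.q_pos n) (Int.fract_nonneg x)
    ⟨Int.fract_nonneg (-y), Int.fract_lt_one (-y)⟩
  push_cast at hx hy
  have hdiff : l • c.step n - torusProj (x, y) =
      torusProj (l / (c.s n * c.q n * c.q n) - Int.fract x,
        -(l / (c.s n * c.q n) - a - Int.fract (-y))) :=
    torusProj_eq_torusProj (m := -⌊x⌋) (m' := ⌊-y⌋ - a)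
      (p := l • ((1 / (c.s n * c.q n ^ 2) : ℝ), (-(1 / (c.s n * c.q n)) : ℝ)) - (x, y)) <| by
      ext <;> simp [-Int.self_sub_floor, ← Int.self_sub_floor] <;> ring
  refine ⟨l, ?_⟩
  rw [dist_eq_norm, hdiff]
  refine (norm_torusProj_le _).trans (max_le hx ?_)
  rw [norm_neg]
  refine hy.trans ?_
  gcongr
  · exact one_le_two
  · exact le_mul_of_one_le_left hq.le (one_le_two.trans hs)

theorem S_succ_pow_q : c.S (n + 1) ^ c.q n = conjTranslation (c.H n) (c.step n) := by
  ext1 z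
  rw [← zpow_natCast, S_succ_zpow_apply, natCast_zsmul, nsmul_torusProj_drift]
  rfl

theorem dist_birkhoffAverage_S_integral_le {f : Torus2 → ℝ} (hf : Continuous f) {ε : ℝ}
    (hε : 0 ≤ ε) (hfε : ∀ x y, dist x y ≤ 2 / c.q n → dist (f x) (f y) ≤ ε) (z : Torus2) :
    dist (birkhoffAverage ℝ (c.S (n + 2) ^ c.q (n + 1)) f (c.s (n + 1) * c.q (n + 1) ^ 2) z)
      (∫ x, f x) ≤ ε := by
  set N := c.s (n + 1) * c.q (n + 1) ^ 2
  set R : Torus2 → Torus2 := (· + c.step (n + 1))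
  set F : Torus2 → ℝ := f ∘ c.H (n + 1)
  have hN : N ≠ 0 := (mul_pos (c.s_pos (n + 1)) (pow_pos (c.q_pos (n + 1)) 2)).ne'
  have hF : Integrable F volume :=
    (hf.comp (c.H (n + 1)).continuous).integrable_of_hasCompactSupport
      (HasCompactSupport.of_compactSpace _)
  have hR : MeasurePreserving R volume volume := measurePreserving_add_right _ _
  have hclose : ∀ x y, dist (birkhoffAverage ℝ R F N x) (birkhoffAverage ℝ R F N y) ≤ ε :=
    dist_birkhoffAverage_add_right_le (c.nsmul_step _) hε (c.exists_dist_nsmul_step_le _)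
      fun x y hxy => hfε _ _ <| by
        have hq := c.q_cast_pos (n + 1)
        calc dist (c.H (n + 1) x) (c.H (n + 1) y) ≤ c.q (n + 1) / c.q n * dist x y :=
              c.dist_H_succ_le n x y
          _ ≤ c.q (n + 1) / c.q n * (2 / c.q (n + 1)) := by gcongr
          _ = 2 / c.q n := by field_simp
  have hint : ∫ x, f x = ∫ x, birkhoffAverage ℝ R F N x :=
    ((c.measurePreserving_H (n + 1)).integral_comp (c.H (n + 1)).measurableEmbedding f).symm.trans
      (integral_birkhoffAverage hR hF hN).symm
  rw [S_succ_pow_q, birkhoffAverage_conjTranslation, hint]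
  exact dist_integral_le_of_forall_dist_le (integrable_birkhoffAverage hR hF N) (hclose _)

theorem dist_S_iterate_T_iterate_le {k : ℕ} (hk : k < c.s n * c.q n ^ 2) (z : Torus2) :
    dist ((c.S (n + 1) ^ c.q n)^[k] z) ((c.T ^ c.q n)^[k] z) ≤ 2 / c.q n := by
  have hq := c.one_le_q_cast n
  have hq' := c.one_le_q_cast (n + 1)
  have htime : ((c.q n * k : ℕ) : ℝ) ≤ c.q (n + 1) := by
    rw [← s_mul_q_pow]
    exact mod_cast (Nat.mul_le_mul_left _ hk.le).trans_eq (by ring)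
  rw [← homeomorph_coe_pow, ← homeomorph_coe_pow, ← pow_mul, ← pow_mul, ← zpow_natCast,
    ← zpow_natCast]
  calc _ ≤ |(((c.q n * k : ℕ) : ℤ) : ℝ)| * (2 * c.delta (n + 1)) := c.dist_S_zpow_T_zpow_le _ _ z
    _ ≤ c.q (n + 1) * (2 * (1 / c.q (n + 1) ^ 3)) := by
        rw [Int.cast_natCast, Nat.abs_cast]
        have := c.delta_nonneg (n + 1)
        gcongr
        exact c.delta_le (n + 1)
    _ = 2 / c.q (n + 1) * (1 / c.q (n + 1)) := by field_simp
    _ ≤ 2 / c.q (n + 1) * 1 := by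
        gcongr
        exact div_le_one_of_le₀ hq' (by positivity)
    _ ≤ 2 / c.q n := by
        rw [mul_one]
        gcongr
        exact Nat.le_of_dvd (c.q_pos _) (c.q_dvd_q_succ n)

theorem tendsto_two_div_q : Tendsto (fun n => 2 / (c.q n : ℝ)) atTop (𝓝 0) := by
  simpa only [mul_one_div, mul_zero] using c.summable_inv_q.tendsto_atTop_zero.const_mul 2

theorem uniquelyErgodicWithVolume_T : UniquelyErgodicWithVolume c.T := by
  refine ⟨c.measurePreserving_T, fun μ _ hμ =>
    eq_of_dist_birkhoffAverage_le fun f ε hε => ?_⟩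
  obtain ⟨δ, hδ, hfδ⟩ := Metric.uniformContinuous_iff.1
    (CompactSpace.uniformContinuous_of_continuous f.continuous) (ε / 2) (half_pos hε)
  obtain ⟨n, hn⟩ := (c.tendsto_two_div_q.eventually (gt_mem_nhds hδ)).exists
  have hfn : ∀ x y, dist x y ≤ 2 / c.q n → dist (f x) (f y) ≤ ε / 2 := fun x y hxy =>
    (hfδ (hxy.trans_lt hn)).le
  have hq : (2 : ℝ) / c.q (n + 1) ≤ 2 / c.q n := by
    have := c.q_cast_pos n
    gcongr
    exact Nat.le_of_dvd (c.q_pos _) (c.q_dvd_q_succ n)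
  have hTμ : MeasurePreserving (c.T ^ c.q (n + 1)) μ μ :=
    homeomorph_coe_pow c.T _ ▸ hμ.iterate _
  refine ⟨_, hTμ, c.s (n + 1) * c.q (n + 1) ^ 2,
    (mul_pos (c.s_pos _) (pow_pos (c.q_pos _) 2)).ne', fun z => ?_⟩
  rw [← add_halves ε]
  refine (dist_triangle _ _ _).trans (add_le_add (dist_birkhoffAverage_le (half_pos hε).le
    fun k hk => hfn _ _ ?_) (c.dist_birkhoffAverage_S_integral_le n f.continuous (half_pos hε).le
      hfn z))
  rw [dist_comm]
  exact (c.dist_S_iterate_T_iterate_le (n + 1) hk z).trans hq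

end Params

end UniqueErgodicity

section Isomorphism

theorem irrational_of_tendsto_mul_sub {ι : Type*} {l : Filter ι} [l.NeBot] {x : ℝ} {a m : ι → ℤ}
    (hne : ∀ i, a i * x - m i ≠ 0) (hlim : Tendsto (fun i => a i * x - m i) l (𝓝 0)) :
    Irrational x := by
  rintro ⟨r, rfl⟩
  have hden : (0 : ℝ) < r.den := mod_cast r.den_pos
  obtain ⟨i, hi⟩ := (hlim.norm.eventually_lt_const
    (show ‖(0 : ℝ)‖ < 1 / r.den by rw [norm_zero]; positivity)).exists
  have hint : r.den * (a i * (r : ℝ) - m i) = (a i * r.num - r.den * m i : ℤ) := by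
    have hr : (r.den : ℝ) * r = r.num := mod_cast Rat.den_mul_eq_num r
    push_cast
    rw [← hr]
    ring
  have hlt : |((a i * r.num - r.den * m i : ℤ) : ℝ)| < 1 := by
    rwa [← hint, abs_mul, Nat.abs_cast, mul_comm, ← lt_div_iff₀ hden]
  have hzero : a i * r.num - r.den * m i = 0 := Int.abs_lt_one_iff.1 (mod_cast hlt)
  rw [hzero, Int.cast_zero, mul_eq_zero_iff_left hden.ne'] at hint
  exact hne i hint

theorem exists_measurable_leftInvOn {X Y : Type*} [MeasurableSpace X] [StandardBorelSpace X]
    [Nonempty X] [MeasurableSpace Y] [MeasurableSpace.CountablySeparated Y] {f : X → Y}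
    (hf : Measurable f) {A : Set X} (hA : MeasurableSet A) (hinj : InjOn f A) :
    ∃ g : Y → X, Measurable g ∧ LeftInvOn g f A := by
  have := hA.standardBorel
  have hemb : MeasurableEmbedding (A.domRestrict f) :=
    (hf.comp measurable_subtype_coe).measurableEmbedding hinj.injective
  obtain ⟨g, hg, hgf⟩ := hemb.exists_measurable_extend measurable_subtype_coe fun _ => ‹_›
  exact ⟨g, hg, fun x hx => congrFun hgf ⟨x, hx⟩⟩

theorem exists_mapsTo_subset_of_ae_mem {X : Type*} [MeasurableSpace X] {μ : Measure X} {T : X → X}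
    (hT : MeasurePreserving T μ μ) {A : Set X} (hA : MeasurableSet A) (hae : ∀ᵐ x ∂μ, x ∈ A) :
    ∃ A' ⊆ A, MeasurableSet A' ∧ μ A'ᶜ = 0 ∧ MapsTo T A' A' := by
  refine ⟨⋂ k : ℕ, T^[k] ⁻¹' A, iInter_subset (fun k => T^[k] ⁻¹' A) 0,
    .iInter fun k => (hT.iterate k).measurable hA, ?_, fun x hx => ?_⟩
  · refine mem_ae_iff.1 (countable_iInter_mem.2 fun k => ?_)
    exact (hT.iterate k).quasiMeasurePreserving.ae hae
  · rw [mem_iInter] at hx ⊢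
    exact fun k => hx (k + 1)

theorem isoToIrrationalRotation_of_injOn {T : Torus2 → Torus2}
    (hT : MeasurePreserving T volume volume) {ψ : Torus2 → Torus1}
    (hψ : MeasurePreserving ψ volume volume) {α : ℝ} (hα : Irrational α)
    (hψT : ∀ z, ψ (T z) = ψ z + α) {A : Set Torus2} (hA : MeasurableSet A)
    (hae : ∀ᵐ z, z ∈ A) (hinj : InjOn ψ A) : IsoToIrrationalRotation T := by
  obtain ⟨A', hA'A, hA', hA'0, hTA'⟩ := exists_mapsTo_subset_of_ae_mem hT hA hae
  have hinj' := hinj.mono hA'A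
  obtain ⟨φ, hφ, hφψ⟩ := exists_measurable_leftInvOn hψ.measurable hA' hinj'
  have hB := hA'.image_of_measurable_injOn hψ.measurable hinj'
  refine ⟨α, hα, A', ψ '' A', ψ, φ, hA', hB, hA'0, ?_, hTA', ?_, hψ.measurable, hφ,
    mapsTo_image _ _, hφψ.mapsTo (surjOn_image _ _), hφψ, hφψ.rightInvOn_image, hψ.map_eq,
    fun z _ => hψT z⟩
  · rw [← hψ.measure_preimage hB.compl.nullMeasurableSet]
    exact measure_mono_null (fun z hz hzA => hz (mem_image_of_mem ψ hzA)) hA'0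
  · rintro _ ⟨z, hz, rfl⟩
    exact ⟨T z, hTA' hz, hψT z⟩

theorem dist_doubleShear_le_of_smul_eq {A : Type*} [SeminormedAddCommGroup A] {q : ℕ} (hq : 1 ≤ q)
    {g : C(A, A)} {ρ : ℝ} (hg : ∀ x, ‖g x‖ ≤ ρ) {p p' : A × A} (hp : q • g p.2 = p.2)
    (hp' : q • g p'.2 = p'.2) :
    dist (doubleShear q g p) (doubleShear q g p') ≤ q * dist p.1 p'.1 + 2 * ρ := by
  have hρ : 0 ≤ ρ := (norm_nonneg _).trans (hg 0)
  refine max_le ?_ ?_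
  · calc dist (p.1 + g p.2) (p'.1 + g p'.2) ≤ dist p.1 p'.1 + dist (g p.2) (g p'.2) :=
          dist_add_add_le _ _ _ _
      _ ≤ q * dist p.1 p'.1 + 2 * ρ := by
          gcongr
          · exact le_mul_of_one_le_left dist_nonneg (mod_cast hq)
          · linarith [dist_le_norm_add_norm (g p.2) (g p'.2), hg p.2, hg p'.2]
  · have hflat {y x : A} (h : q • g y = y) : y - q • (x + g y) = -(q • x) := by
      rw [smul_add, h, sub_add_cancel_right]
    have hsmul := norm_nsmul_le (n := q) (a := p.1 - p'.1)
    rw [smul_sub, ← dist_eq_norm, ← dist_eq_norm] at hsmul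
    simp only [doubleShear_apply, hflat hp, hflat hp', dist_neg_neg]
    linarith

namespace Params

variable {K d : ℕ} (c : Params K d) (n : ℕ)

/-- The rotation number of the limit diffeomorphism. -/
noncomputable def alphaLim : ℝ :=
  ∑' k, 1 / (c.q (k + 1) : ℝ)

theorem tendsto_alpha : Tendsto c.alpha atTop (𝓝 c.alphaLim) :=
  ((summable_nat_add_iff 1).2 c.summable_inv_q).hasSum.tendsto_sum_nat

theorem alpha_lt_alphaLim : c.alpha n < c.alphaLim :=
  calc c.alpha n < c.alpha (n + 1) := by
        rw [alpha_succ]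
        exact lt_add_of_pos_right _ (one_div_pos.2 (c.q_cast_pos _))
    _ ≤ c.alphaLim := ((summable_nat_add_iff 1).2 c.summable_inv_q).sum_le_tsum _
        fun k _ => by positivity

theorem dist_alpha_alphaLim_le : dist (c.alpha n) c.alphaLim ≤ 2 * (1 / c.q (n + 1)) := by
  obtain ⟨x, hx, hdist⟩ := exists_tendsto_of_dist_le_halving (u := c.alpha)
    (δ := fun n => 1 / (c.q (n + 1) : ℝ)) (fun n => c.two_mul_inv_q_succ_le (n + 1)) fun n => by
      rw [alpha_succ, dist_self_add_right, Real.norm_of_nonneg (by positivity)]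
  rw [tendsto_nhds_unique c.tendsto_alpha hx]
  exact hdist n

theorem irrational_alphaLim : Irrational c.alphaLim := by
  choose m hm using c.exists_int_eq_q_mul_alpha
  refine irrational_of_tendsto_mul_sub (l := atTop) (a := fun n => c.q n) (m := m)
    (fun n => ?_) (squeeze_zero_norm (fun n => ?_) (by simpa using c.tendsto_delta.const_mul 2))
  all_goals rw [← hm n, Int.cast_natCast, ← mul_sub]
  · exact mul_ne_zero (c.q_cast_pos n).ne' (sub_pos.2 (c.alpha_lt_alphaLim n)).ne'
  · rw [norm_mul, RCLike.norm_natCast, ← dist_eq_norm, dist_comm]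
    have hq := c.one_le_q_cast n
    calc c.q n * dist (c.alpha n) c.alphaLim ≤ c.q n ^ 2 * (2 * (1 / c.q (n + 1))) := by
          gcongr
          · exact le_self_pow₀ hq two_ne_zero
          · exact c.dist_alpha_alphaLim_le n
      _ = 2 * c.delta n := by rw [delta]; ring

/-- The factor map of stage `n`, which semiconjugates `S n` to the rotation by `alpha n`. -/
noncomputable def approxFactor (z : Torus2) : Torus1 :=
  ((c.H n).symm z).1

theorem continuous_approxFactor : Continuous (c.approxFactor n) :=
  continuous_fst.comp (c.H n).symm.continuous

theorem measurePreserving_approxFactor :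
    MeasurePreserving (c.approxFactor n) volume volume :=
  measurePreserving_fst.comp (measurePreserving_symm (c.measurePreserving_H n))

theorem approxFactor_S (z : Torus2) :
    c.approxFactor n (c.S n z) = c.approxFactor n z + c.alpha n := by
  have hS := c.S_zpow_apply n 1 z
  rw [zpow_one, one_zsmul] at hS
  rw [approxFactor, hS, Homeomorph.symm_apply_apply]
  rfl

theorem dist_approxFactor_succ_le (z : Torus2) :
    dist (c.approxFactor n z) (c.approxFactor (n + 1) z) ≤ 1 / c.q n := by
  have hsucc : (c.H (n + 1)).symm z =
      (doubleShear (c.q n) (c.circleSawtooth n)).symm ((c.H n).symm z) := rfl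
  rw [approxFactor, approxFactor, hsucc, doubleShear_symm_apply, dist_self_sub_right]
  exact c.norm_circleSawtooth_le n _

theorem exists_tendsto_approxFactor (z : Torus2) :
    ∃ t, Tendsto (c.approxFactor · z) atTop (𝓝 t) ∧
      ∀ n, dist (c.approxFactor n z) t ≤ 2 * (1 / c.q n) :=
  exists_tendsto_of_dist_le_halving c.two_mul_inv_q_succ_le (c.dist_approxFactor_succ_le · z)

/-- The factor map from the limit diffeomorphism to a rotation of the circle. -/
noncomputable def factor (z : Torus2) : Torus1 :=
  (c.exists_tendsto_approxFactor z).choose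

theorem dist_approxFactor_factor_le (z : Torus2) :
    dist (c.approxFactor n z) (c.factor z) ≤ 2 * (1 / c.q n) :=
  (c.exists_tendsto_approxFactor z).choose_spec.2 n

theorem tendstoUniformly_approxFactor : TendstoUniformly c.approxFactor c.factor atTop :=
  tendstoUniformly_of_dist_le
    (by simpa only [mul_zero] using c.summable_inv_q.tendsto_atTop_zero.const_mul 2)
    c.dist_approxFactor_factor_le

theorem continuous_factor : Continuous c.factor :=
  c.tendstoUniformly_approxFactor.continuous (.of_forall c.continuous_approxFactor)

theorem measurePreserving_factor : MeasurePreserving c.factor volume volume :=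
  measurePreserving_of_tendsto c.measurePreserving_approxFactor c.continuous_factor.measurable
    c.tendstoUniformly_approxFactor.tendsto_at

theorem factor_T (z : Torus2) : c.factor (c.T z) = c.factor z + c.alphaLim := by
  have hST : Tendsto (fun n => c.S n z) atTop (𝓝 (c.T z)) := by
    simpa only [zpow_one] using c.tendsto_S_zpow 1 z
  have hleft := c.tendstoUniformly_approxFactor.tendsto_comp c.continuous_factor.continuousAt hST
  simp only [approxFactor_S] at hleft
  exact tendsto_nhds_unique hleft ((c.tendstoUniformly_approxFactor.tendsto_at z).add
    (((AddCircle.continuous_mk' 1).tendsto _).comp c.tendsto_alpha))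

/-- The part of the circle where the `n`-th smooth staircase is locally constant, so that the
second coordinate of the `n`-th double shear depends on the first coordinate only. -/
def flat : Set Torus1 :=
  {y | c.q n • c.circleSawtooth n y = y}

theorem isClosed_flat : IsClosed (c.flat n) :=
  isClosed_eq (by fun_prop) continuous_id

theorem nsmul_circleSawtooth_coe {a : ℝ} (ha : a ∈ Ico 0 1) :
    c.q n • c.circleSawtooth n a = a - (Real.smoothTransition (c.s n * a) : Torus1) := by
  change c.q n • ((sawtooth (c.q n) (c.s n) a : ℝ) : Torus1) = _
  rw [← AddCircle.coe_nsmul, nsmul_eq_mul, sawtooth, smoothStair_of_mem_Ico ha,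
    mul_div_cancel₀ _ (c.q_cast_pos n).ne', AddCircle.coe_sub]

theorem coe_mem_flat {a : ℝ} (ha : 1 / (c.s n : ℝ) ≤ a) (ha' : a < 1) :
    (a : Torus1) ∈ c.flat n := by
  have hs := c.s_cast_pos n
  have h0 : 0 ≤ a := (one_div_nonneg.2 hs.le).trans ha
  rw [flat, mem_ofPred_eq, nsmul_circleSawtooth_coe c n ⟨h0, ha'⟩,
    Real.smoothTransition.one_of_one_le ((div_le_iff₀' hs).1 ha), AddCircle.coe_period, sub_zero]

theorem compl_flat_subset : (c.flat n)ᶜ ⊆ Metric.closedBall 0 (1 / c.s n) := by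
  intro y hy
  obtain ⟨a, ⟨h0, h1⟩, rfl⟩ := AddCircle.eq_coe_Ico y
  rw [mem_closedBall_zero_iff]
  by_contra! hlt
  exact hy (c.coe_mem_flat n ((hlt.le.trans (norm_coe_le a)).trans_eq (abs_of_nonneg h0)) h1)

/-- The points whose coordinates at stage `n + 1` lie in `flat n` for all but finitely many `n`.
The factor map is injective on this set of full measure. -/
def goodSet : Set Torus2 :=
  {z | ∀ᶠ n in atTop, ((c.H (n + 1)).symm z).2 ∈ c.flat n}

theorem measurableSet_goodSet : MeasurableSet c.goodSet := by
  have hliminf : c.goodSet = liminf (fun n => {z | ((c.H (n + 1)).symm z).2 ∈ c.flat n}) atTop := by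
    ext z
    exact (mem_liminf_iff_eventually_mem
      (s := fun n => {z | ((c.H (n + 1)).symm z).2 ∈ c.flat n})).symm
  rw [hliminf]
  exact .measurableSet_liminf fun n =>
    ((c.isClosed_flat n).preimage (continuous_snd.comp (c.H (n + 1)).symm.continuous)).measurableSet

theorem volume_notMem_flat_le :
    volume {z | ((c.H (n + 1)).symm z).2 ∉ c.flat n} ≤ ENNReal.ofReal (2 * (1 / c.q n)) :=
  have hsnd : MeasurePreserving (fun z => ((c.H (n + 1)).symm z).2) volume volume :=
    measurePreserving_snd.comp (measurePreserving_symm (c.measurePreserving_H (n + 1)))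
  calc _ = volume (c.flat n)ᶜ :=
        hsnd.measure_preimage (c.isClosed_flat n).measurableSet.compl.nullMeasurableSet
    _ ≤ volume (Metric.closedBall (0 : Torus1) (1 / c.s n)) :=
        measure_mono (c.compl_flat_subset n)
    _ ≤ ENNReal.ofReal (2 * (1 / c.q n)) := by
        rw [AddCircle.volume_closedBall]
        refine ENNReal.ofReal_le_ofReal ((min_le_right _ _).trans ?_)
        gcongr
        exacts [c.q_cast_pos n, c.q_le_s n]

theorem ae_mem_goodSet : ∀ᵐ z, z ∈ c.goodSet := by
  have hsum : ∑' n, volume {z | ((c.H (n + 1)).symm z).2 ∉ c.flat n} ≠ ⊤ :=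
    ne_top_of_le_ne_top (c.summable_inv_q.mul_left 2).tsum_ofReal_ne_top
      (ENNReal.tsum_le_tsum c.volume_notMem_flat_le)
  filter_upwards [ae_eventually_notMem hsum] with z hz
  exact hz.mono fun n hn => not_not.1 hn

theorem dist_le_of_factor_eq {z z' : Torus2} (h : c.factor z = c.factor z')
    (hz : ((c.H (n + 2)).symm z).2 ∈ c.flat (n + 1))
    (hz' : ((c.H (n + 2)).symm z').2 ∈ c.flat (n + 1)) : dist z z' ≤ 6 * (1 / c.q n) := by
  set w := (c.H (n + 2)).symm z with hw
  set w' := (c.H (n + 2)).symm z' with hw'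
  have hH (u : Torus2) : c.H (n + 2) u =
      c.H (n + 1) (doubleShear (c.q (n + 1)) (c.circleSawtooth (n + 1)) u) := rfl
  have hfst : dist w.1 w'.1 ≤ 4 / c.q (n + 2) := by
    have hdist := c.dist_approxFactor_factor_le (n + 2) z
    have hdist' := c.dist_approxFactor_factor_le (n + 2) z'
    rw [dist_comm, ← h] at hdist'
    calc dist w.1 w'.1 ≤ _ := dist_triangle w.1 (c.factor z) w'.1
      _ ≤ 2 * (1 / c.q (n + 2)) + 2 * (1 / c.q (n + 2)) := add_le_add hdist hdist'
      _ = 4 / c.q (n + 2) := by ring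
  have hq := c.q_cast_pos (n + 1)
  have hratio : c.q (n + 1) * (4 / c.q (n + 2)) ≤ 4 / (c.q (n + 1) : ℝ) :=
    calc c.q (n + 1) * (4 / c.q (n + 2)) = 4 / (c.q (n + 1) : ℝ) * c.delta (n + 1) := by
          rw [delta]; field_simp
      _ ≤ 4 / c.q (n + 1) := mul_le_of_le_one_right (by positivity) <|
          (c.delta_le _).trans (div_le_one_of_le₀ (one_le_pow₀ (c.one_le_q_cast _)) (by positivity))
  rw [← (c.H (n + 2)).apply_symm_apply z, ← (c.H (n + 2)).apply_symm_apply z', ← hw, ← hw', hH, hH]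
  calc _ ≤ c.q (n + 1) / c.q n * (c.q (n + 1) * dist w.1 w'.1 + 2 * (1 / c.q (n + 1))) :=
        (c.dist_H_succ_le n _ _).trans <| by
          gcongr
          exact dist_doubleShear_le_of_smul_eq (c.q_pos _) (c.norm_circleSawtooth_le _) hz hz'
    _ ≤ c.q (n + 1) / c.q n * (4 / c.q (n + 1) + 2 * (1 / c.q (n + 1))) := by
        gcongr
        exact hratio.trans' (by gcongr)
    _ = 6 * (1 / c.q n) := by field_simp; norm_num

theorem injOn_factor : InjOn c.factor c.goodSet := fun z hz z' hz' h => by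
  have hlim : Tendsto (fun n => 6 * (1 / (c.q n : ℝ))) atTop (𝓝 0) := by
    simpa only [mul_zero] using c.summable_inv_q.tendsto_atTop_zero.const_mul 6
  refine dist_le_zero.1 (ge_of_tendsto hlim ?_)
  filter_upwards [(tendsto_add_atTop_nat 1).eventually hz,
    (tendsto_add_atTop_nat 1).eventually hz'] with n hn hn'
  exact c.dist_le_of_factor_eq n h hn hn'

theorem isoToIrrationalRotation_T : IsoToIrrationalRotation c.T :=
  isoToIrrationalRotation_of_injOn c.measurePreserving_T c.measurePreserving_factor
    c.irrational_alphaLim c.factor_T c.measurableSet_goodSet c.ae_mem_goodSet c.injOn_factor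

end Params

end Isomorphism

section SlowEntropy

/-- `F` is the set of centres of a cover of `X` by `(ε, m)`-Bowen balls. -/
def IsBowenCover {X : Type*} [PseudoMetricSpace X] (T : X → X) (m : ℕ) (ε : ℝ) (F : Finset X) :
    Prop :=
  ∀ y, ∃ x ∈ F, bowenDist T m x y < ε

/-- The exponents `t > 0` for which the Bowen covering numbers at scale `ε` are not `o(a · t)`;
`topSlowEntFun` is their supremum. -/
def growthExponents {X : Type*} [PseudoMetricSpace X] (T : X → X) (a : ℕ → ℝ → ℝ) (ε : ℝ) :
    Set ℝ :=
  {t | 0 < t ∧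
    0 < atTop.limsup fun n => (bowenCoverNum T n ε : ℝ≥0∞) / ENNReal.ofReal (a n t)}

variable {X : Type*} [PseudoMetricSpace X] {T : X → X} {m : ℕ} {ε ε' : ℝ}

theorem bowenDist_le {x y : X} {r : ℝ} (hr : 0 ≤ r)
    (h : ∀ i < m, dist (T^[i] x) (T^[i] y) ≤ r) : bowenDist T m x y ≤ r := by
  lift r to ℝ≥0 using hr
  exact NNReal.coe_le_coe.2 (Finset.sup_le fun i hi => h i (Finset.mem_range.1 hi))

theorem dist_iterate_le_bowenDist {i : ℕ} (hi : i < m) (x y : X) :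
    dist (T^[i] x) (T^[i] y) ≤ bowenDist T m x y :=
  NNReal.coe_le_coe.2
    (Finset.le_sup (f := fun i => nndist (T^[i] x) (T^[i] y)) (Finset.mem_range.2 hi))

theorem IsBowenCover.mono {F : Finset X} (hF : IsBowenCover T m ε F) (h : ε ≤ ε') :
    IsBowenCover T m ε' F :=
  fun y => (hF y).imp fun _ ⟨hx, hxy⟩ => ⟨hx, hxy.trans_le h⟩

theorem IsBowenCover.bowenCoverNum_le {F : Finset X} (hF : IsBowenCover T m ε F) :
    bowenCoverNum T m ε ≤ F.card :=
  Nat.sInf_le ⟨F, rfl, hF⟩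

theorem exists_isBowenCover_card_eq [CompactSpace X] (hT : Continuous T) (m : ℕ) (hε : 0 < ε) :
    ∃ F : Finset X, F.card = bowenCoverNum T m ε ∧ IsBowenCover T m ε F := by
  have hball (x : X) : IsOpen {y | bowenDist T m x y < ε} :=
    isOpen_lt (NNReal.continuous_coe.comp (Continuous.finset_sup_apply fun i _ =>
      continuous_const.nndist (hT.iterate i))) continuous_const
  have hself (x : X) : bowenDist T m x x < ε :=
    (bowenDist_le le_rfl fun i _ => (dist_self _).le).trans_lt hε
  obtain ⟨F, -, hF⟩ := isCompact_univ.elim_nhds_subcover _ fun x _ => (hball x).mem_nhds (hself x)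
  have hcover : IsBowenCover T m ε F := fun y => by simpa using hF (mem_univ y)
  exact Nat.sInf_mem (s := {N | ∃ F : Finset X, F.card = N ∧ IsBowenCover T m ε F})
    ⟨F.card, F, rfl, hcover⟩

theorem bowenCoverNum_anti [CompactSpace X] (hT : Continuous T) (m : ℕ) (hε : 0 < ε)
    (h : ε ≤ ε') : bowenCoverNum T m ε' ≤ bowenCoverNum T m ε := by
  obtain ⟨F, hcard, hF⟩ := exists_isBowenCover_card_eq hT m hε
  exact hcard ▸ (hF.mono h).bowenCoverNum_le

theorem card_le_bowenCoverNum [CompactSpace X] (hT : Continuous T) (hε : 0 < ε) {ι : Type*}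
    [Fintype ι] {z : ι → X}
    (hz : Pairwise fun j j' => ∃ i < m, 2 * ε ≤ dist (T^[i] (z j)) (T^[i] (z j'))) :
    Fintype.card ι ≤ bowenCoverNum T m ε := by
  obtain ⟨F, hcard, hF⟩ := exists_isBowenCover_card_eq hT m hε
  choose f hfF hf using fun j => hF (z j)
  rw [← hcard]
  refine Finset.card_le_card_of_injOn f (fun j _ => hfF j) fun j _ j' _ hjj' => ?_
  by_contra hne
  obtain ⟨i, hi, hsep⟩ := hz hne
  have hj := (dist_iterate_le_bowenDist hi _ _).trans_lt (hf j)
  have hj' := (dist_iterate_le_bowenDist hi _ _).trans_lt (hf j')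
  rw [← hjj'] at hj'
  linarith [dist_triangle_left (T^[i] (z j)) (T^[i] (z j')) (T^[i] (f j))]

theorem growthExponents_anti [CompactSpace X] (hT : Continuous T) (a : ℕ → ℝ → ℝ) (hε : 0 < ε)
    (h : ε ≤ ε') : growthExponents T a ε' ⊆ growthExponents T a ε :=
  fun _ ht => ⟨ht.1, ht.2.trans_le <| limsup_le_limsup <| .of_forall fun m =>
    ENNReal.div_le_div_right (mod_cast bowenCoverNum_anti hT m hε h) _⟩

theorem polScale_pos (hm : m ≠ 0) (t : ℝ) : 0 < polScale m t :=
  Real.rpow_pos_of_pos (mod_cast Nat.pos_of_ne_zero hm) t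

theorem bowenCoverNum_div_polScale (hm : m ≠ 0) (t : ℝ) :
    (bowenCoverNum T m ε : ℝ≥0∞) / ENNReal.ofReal (polScale m t) =
      ENNReal.ofReal (bowenCoverNum T m ε / polScale m t) := by
  rw [ENNReal.ofReal_div_of_pos (polScale_pos hm t), ENNReal.ofReal_natCast]

theorem mem_upperBounds_growthExponents_polScale {β C : ℝ}
    (h : ∀ m ≠ 0, (bowenCoverNum T m ε : ℝ) ≤ C * m ^ β) :
    β ∈ upperBounds (growthExponents T polScale ε) := by
  rintro t ⟨-, ht⟩
  by_contra! hlt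
  refine ht.ne' (Tendsto.limsup_eq ?_)
  have hlim : Tendsto (fun m : ℕ => ENNReal.ofReal (C * (m : ℝ) ^ (-(t - β)))) atTop (𝓝 0) := by
    have hpow := (tendsto_rpow_neg_atTop (sub_pos.2 hlt)).comp tendsto_natCast_atTop_atTop
    simpa using ENNReal.tendsto_ofReal (hpow.const_mul C)
  refine tendsto_of_tendsto_of_tendsto_of_le_of_le' tendsto_const_nhds hlim
    (.of_forall fun _ => zero_le) ?_
  filter_upwards [eventually_ne_atTop 0] with m hm
  have hm' : (0 : ℝ) < m := mod_cast Nat.pos_of_ne_zero hm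
  rw [bowenCoverNum_div_polScale hm]
  refine ENNReal.ofReal_le_ofReal ((div_le_iff₀ (polScale_pos hm t)).2 ?_)
  rw [polScale, mul_assoc, ← Real.rpow_add hm', neg_sub, sub_add_cancel]
  exact h m hm

theorem mem_growthExponents_polScale {γ : ℝ} (hγ : 0 < γ)
    (h : ∃ᶠ m : ℕ in atTop, (m : ℝ) ^ γ ≤ bowenCoverNum T m ε) :
    γ ∈ growthExponents T polScale ε := by
  refine ⟨hγ, zero_lt_one.trans_le (le_limsup_of_frequently_le ?_)⟩
  refine (h.and_eventually (eventually_ne_atTop 0)).mono fun m ⟨hm, hm0⟩ => ?_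
  rwa [bowenCoverNum_div_polScale hm0, ENNReal.one_le_ofReal, one_le_div (polScale_pos hm0 γ)]

theorem exists_tendsto_topSlowEntFun_polScale [CompactSpace X] (hT : Continuous T) {ε₀ β γ : ℝ}
    (hε₀ : 0 < ε₀) (hγ : 0 < γ)
    (hupper : ∀ ε > 0, ∃ C : ℝ, ∀ m ≠ 0, (bowenCoverNum T m ε : ℝ) ≤ C * m ^ β)
    (hlower : ∃ᶠ m : ℕ in atTop, (m : ℝ) ^ γ ≤ bowenCoverNum T m ε₀) :
    ∃ E, Tendsto (topSlowEntFun T polScale) (𝓝[>] 0) (𝓝 E) ∧ γ ≤ E ∧ E ≤ β := by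
  have hβ (ε : ℝ) (hε : 0 < ε) : β ∈ upperBounds (growthExponents T polScale ε) :=
    (hupper ε hε).elim fun C hC => mem_upperBounds_growthExponents_polScale hC
  have hγmem := mem_growthExponents_polScale hγ hlower
  have hβ0 : 0 ≤ β := hγ.le.trans (hβ ε₀ hε₀ hγmem)
  have hle (ε : ℝ) (hε : 0 < ε) : topSlowEntFun T polScale ε ≤ β := Real.sSup_le (hβ ε hε) hβ0
  have hanti : AntitoneOn (topSlowEntFun T polScale) (Ioi 0) := fun ε hε ε' _ h =>
    Real.sSup_le (fun t ht => le_csSup ⟨β, hβ ε hε⟩ (growthExponents_anti hT _ hε h ht))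
      (Real.sSup_nonneg fun t ht => ht.1.le)
  have hbdd : BddAbove (topSlowEntFun T polScale '' Ioi 0) := ⟨β, forall_mem_image.2 hle⟩
  exact ⟨_, hanti.tendsto_nhdsGT hbdd,
    (le_csSup ⟨β, hβ ε₀ hε₀⟩ hγmem).trans (le_csSup hbdd ⟨ε₀, hε₀, rfl⟩),
    Real.sSup_le (forall_mem_image.2 hle) hβ0⟩

end SlowEntropy

section UpperBound

theorem exists_forall_le_mul_rpow_inv {f : ℕ → ℝ} {u : ℕ → ℝ} {a b : ℝ} {p : ℕ}
    (hu : Tendsto u atTop atTop) (hu0 : ∀ n, 0 ≤ u n) (ha : 0 < a) (hb : 0 ≤ b) (hp : p ≠ 0)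
    (h : ∀ m n : ℕ, (m : ℝ) ≤ a * u (n + 1) ^ p → f m ≤ b * u n) :
    ∃ C : ℝ, ∀ m ≠ 0, f m ≤ C * m ^ (p : ℝ)⁻¹ := by
  refine ⟨b * u 0 + b * (a⁻¹ ^ (p : ℝ)⁻¹), fun m hm => ?_⟩
  have hm1 : 1 ≤ (m : ℝ) ^ (p : ℝ)⁻¹ :=
    Real.one_le_rpow (mod_cast Nat.one_le_iff_ne_zero.2 hm) (by positivity)
  have hlim : Tendsto (fun n => a * u (n + 1) ^ p) atTop atTop :=
    ((tendsto_pow_atTop hp).comp (hu.comp (tendsto_add_atTop_nat 1))).const_mul_atTop ha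
  have hex : ∃ n, (m : ℝ) ≤ a * u (n + 1) ^ p := (hlim.eventually_ge_atTop m).exists
  classical
  have hn := h m _ (Nat.find_spec hex)
  rw [add_mul]
  have hfirst : 0 ≤ b * u 0 := mul_nonneg hb (hu0 0)
  have hsecond : 0 ≤ b * a⁻¹ ^ (p : ℝ)⁻¹ := by positivity
  rcases hk : Nat.find hex with _ | k
  · rw [hk] at hn
    nlinarith
  · rw [hk] at hn
    have hlt : a * u (k + 1) ^ p < m := not_le.1 (Nat.find_min hex (hk ▸ k.lt_succ_self))
    have hroot : u (k + 1) ≤ a⁻¹ ^ (p : ℝ)⁻¹ * (m : ℝ) ^ (p : ℝ)⁻¹ := by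
      rw [← Real.mul_rpow (by positivity) (by positivity), ← div_eq_inv_mul,
        ← Real.pow_rpow_inv_natCast (hu0 (k + 1)) hp]
      have := hu0 (k + 1)
      gcongr
      exact (le_div_iff₀' ha).2 hlt.le
    nlinarith [mul_le_mul_of_nonneg_left hroot hb]

theorem exists_finset_circle_card_le {A : ℕ} (hA : 0 < A) :
    ∃ F : Finset Torus1, F.card ≤ A ∧ ∀ t, ∃ x ∈ F, dist x t ≤ 1 / A := by
  classical
  have hA' : (0 : ℝ) < A := mod_cast hA
  refine ⟨(Finset.range A).image fun a : ℕ => ((a / A : ℝ) : Torus1),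
    Finset.card_image_le.trans (Finset.card_range A).le, fun t => ?_⟩
  obtain ⟨y, ⟨hy0, hy1⟩, rfl⟩ := AddCircle.eq_coe_Ico t
  have hle := Nat.floor_le (mul_nonneg hA'.le hy0)
  have hlt := Nat.lt_floor_add_one (A * y)
  refine ⟨_, Finset.mem_image_of_mem _ (Finset.mem_range.2
    ((Nat.floor_lt (by positivity)).2 (mul_lt_of_lt_one_right hA' hy1))), ?_⟩
  rw [dist_eq_norm, ← AddCircle.coe_sub]
  refine (norm_coe_le _).trans ?_
  rw [div_sub' hA'.ne', abs_div, abs_of_pos hA']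
  gcongr
  exact abs_le.2 ⟨by linarith, by linarith⟩

theorem exists_finset_torus_card_le {A A' : ℕ} (hA : 0 < A) (hA' : 0 < A') :
    ∃ F : Finset Torus2, F.card ≤ A * A' ∧
      ∀ z : Torus2, ∃ x ∈ F, dist x.1 z.1 ≤ 1 / A ∧ dist x.2 z.2 ≤ 1 / A' := by
  obtain ⟨F, hFcard, hF⟩ := exists_finset_circle_card_le hA
  obtain ⟨F', hFcard', hF'⟩ := exists_finset_circle_card_le hA'
  refine ⟨F ×ˢ F', (Finset.card_product F F').trans_le (Nat.mul_le_mul hFcard hFcard'),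
    fun z => ?_⟩
  obtain ⟨x, hx, hxz⟩ := hF z.1
  obtain ⟨x', hx', hxz'⟩ := hF' z.2
  exact ⟨(x, x'), Finset.mk_mem_product hx hx', hxz, hxz'⟩

namespace Params

variable {K d : ℕ} (c : Params K d)

theorem tendsto_q : Tendsto c.q atTop atTop := by
  have hd := c.five_le_exponent
  have hQ : 1 < c.Q := by linarith [c.thousand_le]
  exact (tendsto_pow_atTop_atTop_of_one_lt hQ).comp
    (tendsto_pow_atTop_atTop_of_one_lt (by linarith))

theorem T_zpow_natCast (i : ℕ) : ⇑(c.T ^ (i : ℤ)) = c.T^[i] := by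
  rw [zpow_natCast, homeomorph_coe_pow]

theorem dist_H_succ_add_le (n : ℕ) (w z v : Torus2) :
    dist (c.H (n + 1) (w + v)) (c.H (n + 1) (z + v)) ≤
      c.q n * (c.q n * dist w.1 z.1 + (c.B + 1) * c.s n * dist w.2 z.2) := by
  refine (c.dist_H_le n _ _).trans ?_
  have h := c.dist_doubleShear_le_add n (w + v) (z + v)
  rw [Prod.fst_add, Prod.fst_add, Prod.snd_add, Prod.snd_add, dist_add_right, dist_add_right] at h
  exact mul_le_mul_of_nonneg_left h (c.q n).cast_nonneg

theorem bowenDist_T_H_le (n m : ℕ) (w z : Torus2) :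
    bowenDist c.T m (c.H (n + 1) w) (c.H (n + 1) z) ≤
      c.q n * (c.q n * dist w.1 z.1 + (c.B + 1) * c.s n * dist w.2 z.2) +
        m * (4 * c.delta (n + 2)) := by
  have hδ := c.delta_nonneg (n + 2)
  refine bowenDist_le (by positivity) fun i hi => ?_
  have happrox (x : Torus2) :
      dist (c.H (n + 1) (x + (i : ℤ) • torusProj (c.drift (n + 1)))) (c.T^[i] (c.H (n + 1) x)) ≤
        m * (2 * c.delta (n + 2)) := by
    have h := c.dist_S_zpow_T_zpow_le (n + 2) i (c.H (n + 1) x)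
    rw [S_succ_zpow_apply, T_zpow_natCast, Homeomorph.symm_apply_apply, Int.cast_natCast,
      Nat.abs_cast] at h
    exact h.trans (by gcongr)
  have hadd := c.dist_H_succ_add_le n w z ((i : ℤ) • torusProj (c.drift (n + 1)))
  calc _ ≤ _ := dist_triangle4_left _ _ _ _
    _ ≤ _ := add_le_add hadd (add_le_add (happrox w) (happrox z))
    _ = _ := by ring

theorem bowenCoverNum_T_le {n m R : ℕ} {ε : ℝ} (hR : 0 < R)
    (hε : 2 / R + m * (4 * c.delta (n + 2)) < ε) :
    bowenCoverNum c.T m ε ≤ R ^ 2 * (c.B + 1) * c.q (n + 1) := by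
  classical
  have hq := c.q_pos n
  have hs := c.s_pos n
  obtain ⟨F, hFcard, hF⟩ := exists_finset_torus_card_le (A := R * c.q n ^ 2)
    (A' := R * (c.B + 1) * c.s n * c.q n) (by positivity) (by positivity)
  have hcover : IsBowenCover c.T m ε (F.image (c.H (n + 1))) := fun y => by
    obtain ⟨x, hx, hfst, hsnd⟩ := hF ((c.H (n + 1)).symm y)
    refine ⟨_, Finset.mem_image_of_mem _ hx, lt_of_le_of_lt ?_ hε⟩
    have h := c.bowenDist_T_H_le n m x ((c.H (n + 1)).symm y)
    rw [Homeomorph.apply_symm_apply] at h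
    refine h.trans (add_le_add_left ?_ _)
    calc _ ≤ c.q n * (c.q n * (1 / (R * c.q n ^ 2 : ℕ)) + (c.B + 1) * c.s n *
            (1 / (R * (c.B + 1) * c.s n * c.q n : ℕ)) : ℝ) := by gcongr
      _ = 2 / (R : ℝ) := by
          push_cast
          field_simp
          norm_num
  calc bowenCoverNum c.T m ε ≤ _ := hcover.bowenCoverNum_le
    _ ≤ R * c.q n ^ 2 * (R * (c.B + 1) * c.s n * c.q n) := Finset.card_image_le.trans hFcard
    _ = R ^ 2 * (c.B + 1) * c.q (n + 1) := by
        rw [← c.s_mul_q_pow n]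
        ring

theorem delta_mul_q_pow (n : ℕ) : c.delta n * c.q n ^ (d - 2) = 1 := by
  have hd : 2 ≤ d := by linarith [c.five_le_exponent]
  rw [delta, div_mul_eq_mul_div, ← pow_add, Nat.add_sub_cancel' hd, q_succ, Nat.cast_pow,
    div_self (pow_ne_zero d (c.q_cast_pos n).ne')]

theorem exists_bowenCoverNum_T_le_mul_rpow {ε : ℝ} (hε : 0 < ε) :
    ∃ C : ℝ, ∀ m ≠ 0, (bowenCoverNum c.T m ε : ℝ) ≤ C * m ^ ((d - 2 : ℕ) : ℝ)⁻¹ := by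
  obtain ⟨R, hR⟩ := exists_nat_gt (4 / ε)
  have hR0 : (0 : ℝ) < R := (by positivity : 0 < 4 / ε).trans hR
  have hd := c.five_le_exponent
  refine exists_forall_le_mul_rpow_inv (u := fun n => c.q (n + 1)) (a := ε / 16)
    (b := (R ^ 2 * (c.B + 1) : ℕ)) (tendsto_natCast_atTop_atTop.comp
      (c.tendsto_q.comp (tendsto_add_atTop_nat 1))) (fun n => Nat.cast_nonneg _)
    (by positivity) (Nat.cast_nonneg _) (by lia) fun m n hm => ?_
  have hgrid : 2 / R < ε / 2 := by
    rw [div_lt_iff₀ hε] at hR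
    rw [div_lt_iff₀ hR0]
    linarith
  have hdrift : m * (4 * c.delta (n + 2)) ≤ ε / 4 := by
    calc m * (4 * c.delta (n + 2))
        ≤ (ε / 16 * c.q (n + 2) ^ (d - 2)) * (4 * c.delta (n + 2)) := by
          have := c.delta_nonneg (n + 2)
          gcongr
      _ = ε / 4 := by linear_combination ε / 4 * c.delta_mul_q_pow (n + 2)
  exact_mod_cast c.bowenCoverNum_T_le (mod_cast hR0) (show _ < ε by linarith)

end Params

end UpperBound

section LowerBound

theorem exists_eq_add_half {f : ℝ → ℝ} (hf : Continuous f) (h : f 1 = f 0 + 1) :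
    ∃ b ∈ Icc (0 : ℝ) (1 / 2), f (b + 1 / 2) = f b + 1 / 2 := by
  let φ (b : ℝ) : ℝ := f (b + 1 / 2) - f b
  have hsum : φ 0 + φ (1 / 2) = 1 := by
    simp only [φ, zero_add, add_halves, h]
    ring
  have hmem : (1 / 2 : ℝ) ∈ uIcc (φ 0) (φ (1 / 2)) := by
    rw [mem_uIcc]
    rcases le_total (φ 0) (1 / 2) with h0 | h0
    · exact .inl ⟨h0, by linarith⟩
    · exact .inr ⟨by linarith, h0⟩
  obtain ⟨b, hb, hφ⟩ := intermediate_value_uIcc (by fun_prop) hmem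
  rw [uIcc_of_le (by norm_num)] at hb
  exact ⟨b, hb, by linarith⟩

theorem smoothTransition_one_half : Real.smoothTransition (1 / 2) = 1 / 2 := by
  have hpos := expNegInvGlue.pos_of_pos (x := 1 / 2) (by norm_num)
  rw [Real.smoothTransition, sub_half, ← two_mul]
  field_simp

section Periodic

variable {A : Type*} [AddCommGroup A] [TopologicalSpace A] [IsTopologicalAddGroup A] {t : A}

theorem doubleShear_add_of_periodic (q : ℕ) {g : C(A, A)} (hg : Function.Periodic g t)
    (p : A × A) : doubleShear q g (p + (0, t)) = doubleShear q g p + (0, t) := by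
  ext
  · simp only [doubleShear_apply, Prod.fst_add, Prod.snd_add, add_zero, hg p.2]
  · simp only [doubleShear_apply, Prod.fst_add, Prod.snd_add, add_zero, hg p.2]
    exact add_sub_right_comm _ _ _

theorem conjugation_add_of_periodic (q : ℕ → ℕ) {g : ℕ → C(A, A)}
    (hg : ∀ n, Function.Periodic (g n) t) (n : ℕ) (p : A × A) :
    conjugation q g n (p + (0, t)) = conjugation q g n p + (0, t) := by
  induction n generalizing p with
  | zero => rfl
  | succ n ih =>
    change conjugation q g n (doubleShear (q n) (g n) (p + (0, t))) =
      conjugation q g n (doubleShear (q n) (g n) p) + (0, t)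
    rw [doubleShear_add_of_periodic (q n) (hg n), ih]

end Periodic

namespace Params

variable {K d : ℕ} (c : Params K d)

theorem exists_half_le_dist_H (n : ℕ) :
    ∃ b ∈ Icc (0 : ℝ) (1 / 2),
      1 / 2 ≤ dist (c.H n (0, ((b + 1 / 2 : ℝ) : Torus1))) (c.H n (0, (b : Torus1))) := by
  let f (b : ℝ) : ℝ := (c.planarH n (0, b)).2
  have hf : Continuous f := by fun_prop
  have hf1 : f 1 = f 0 + 1 := by
    have h := conjugation_add_of_periodic c.q (g := c.planarSawtooth)
      (fun n => sawtooth_periodic (c.q n) (c.s n)) n ((0 : ℝ), (0 : ℝ))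
    rw [Prod.mk_add_mk, add_zero, zero_add] at h
    exact congrArg Prod.snd h
  have hlift (b : ℝ) : (c.H n (0, (b : Torus1))).2 = f b :=
    congrArg Prod.snd (c.semiconj_H n (0, b)).symm
  obtain ⟨b, hb, hfb⟩ := exists_eq_add_half hf hf1
  refine ⟨b, hb, le_trans ?_ (le_max_right _ _)⟩
  rw [hlift, hlift, hfb, AddCircle.coe_add, dist_self_add_left]
  simpa using (AddCircle.norm_half_period_eq (p := (1 : ℝ))).ge

theorem snd_doubleShear_coe (n : ℕ) (x : Torus1) {a : ℝ} (ha : a ∈ Ico 0 1) :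
    (doubleShear (c.q n) (c.circleSawtooth n) (x, (a : Torus1))).2 =
      Real.smoothTransition (c.s n * a) - c.q n • x := by
  rw [doubleShear_apply, smul_add, c.nsmul_circleSawtooth_coe n ha]
  change (a : Torus1) - (c.q n • x + (a - Real.smoothTransition (c.s n * a))) = _
  abel

theorem dist_H_H_le (k : ℕ) {x : Torus1} (hx : ‖x‖ ≤ 1 / c.q (k + 1)) (y : Torus1) :
    dist (c.H (k + 2) (x, y))
        (c.H (k + 1) (0, (doubleShear (c.q (k + 1)) (c.circleSawtooth (k + 1)) (x, y)).2)) ≤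
      2 / c.q k := by
  have hq := c.q_cast_pos (k + 1)
  refine (c.dist_H_succ_le k _ _).trans ?_
  calc _ ≤ (c.q (k + 1) / c.q k : ℝ) * (1 / c.q (k + 1) + 1 / c.q (k + 1)) := by
        gcongr
        refine max_le ?_ ((dist_self _).trans_le (by positivity))
        rw [dist_zero_right]
        exact (norm_add_le _ _).trans (add_le_add hx (c.norm_circleSawtooth_le (k + 1) y))
    _ = 2 / c.q k := by field_simp; norm_num

theorem exists_two_fifths_le_dist_H (k : ℕ) {η : ℝ}
    (hη : η ∈ Icc (1 / (c.s (k + 1) : ℝ)) (1 - 1 / c.s (k + 1))) :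
    ∃ w, 2 / 5 ≤ dist (c.H (k + 2) w) (c.H (k + 2) (w + (0, (η : Torus1)))) := by
  obtain ⟨b, hb, hdist⟩ := c.exists_half_le_dist_H (k + 1)
  have hq := c.q_cast_pos (k + 1)
  have hs := c.s_cast_pos (k + 1)
  have hs2 := c.two_le_s_cast (k + 1)
  set s : ℝ := ↑(c.s (k + 1))
  let x : Torus1 := ((-b / c.q (k + 1) : ℝ) : Torus1)
  have hx : ‖x‖ ≤ 1 / c.q (k + 1) := by
    refine (norm_coe_le _).trans ?_
    rw [abs_div, abs_of_pos hq, abs_neg, abs_of_nonneg hb.1]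
    gcongr
    linarith [hb.2]
  have hqx : c.q (k + 1) • x = -(b : Torus1) := by
    rw [← AddCircle.coe_nsmul, nsmul_eq_mul, mul_div_cancel₀ _ hq.ne', AddCircle.coe_neg]
  have hinv : 0 < 1 / s := one_div_pos.2 hs
  let y : ℝ := 1 / 2 / s
  have hy : y = 1 / s / 2 := by simp only [y]; ring
  have hsy : s * y = 1 / 2 := mul_div_cancel₀ _ hs.ne'
  have hu := c.dist_H_H_le k hx (y : Torus1)
  rw [c.snd_doubleShear_coe _ _ ⟨by positivity, by linarith [hη.1, hη.2]⟩, hsy,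
    smoothTransition_one_half, hqx, sub_neg_eq_add, ← AddCircle.coe_add, add_comm (1 / 2) b] at hu
  have hu' := c.dist_H_H_le k hx ((y + η : ℝ) : Torus1)
  rw [c.snd_doubleShear_coe _ _ ⟨by linarith [hη.1], by linarith [hη.2]⟩,
    Real.smoothTransition.one_of_one_le ((div_le_iff₀' hs).1 (by linarith [hη.1])), hqx,
    sub_neg_eq_add, AddCircle.coe_period, zero_add] at hu'
  refine ⟨(x, (y : Torus1)), ?_⟩
  rw [Prod.mk_add_mk, add_zero, ← AddCircle.coe_add]
  have hsmall : 2 / (c.q k : ℝ) ≤ 2 / 1000 := by gcongr; exact c.thousand_le_q_cast k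
  have htriangle := dist_triangle4_left (c.H (k + 2) (x, (y : Torus1)))
    (c.H (k + 2) (x, ((y + η : ℝ) : Torus1))) (c.H (k + 1) (0, ((b + 1 / 2 : ℝ) : Torus1)))
    (c.H (k + 1) (0, (b : Torus1)))
  linarith

theorem dist_T_iterate_H_le {k l : ℕ} (hl : l < c.s (k + 1) * c.q (k + 1) ^ 2) {z w : Torus2}
    (hzw : dist (l • c.step (k + 1)) (w - z) ≤ 2 / c.q (k + 1)) :
    dist (c.T^[c.q (k + 1) * l] (c.H (k + 1) z)) (c.H (k + 1) w) ≤ 4 / c.q k := by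
  have hq := c.q_cast_pos (k + 1)
  have happrox := c.dist_S_iterate_T_iterate_le (k + 1) hl (c.H (k + 1) z)
  rw [S_succ_pow_q, ← homeomorph_coe_pow, ← zpow_natCast, conjTranslation_zpow_apply,
    Homeomorph.symm_apply_apply, natCast_zsmul, homeomorph_coe_pow, ← Function.iterate_mul]
    at happrox
  have hH := c.dist_H_succ_le k (z + l • c.step (k + 1)) w
  rw [dist_eq_norm, sub_sub_eq_add_sub, ← dist_eq_norm, add_comm] at hzw
  have hq_le : c.q k ≤ c.q (k + 1) := Nat.le_of_dvd (c.q_pos _) (c.q_dvd_q_succ k)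
  calc _ ≤ dist (c.T^[c.q (k + 1) * l] (c.H (k + 1) z)) (c.H (k + 1) (z + l • c.step (k + 1))) +
        dist (c.H (k + 1) (z + l • c.step (k + 1))) (c.H (k + 1) w) := dist_triangle _ _ _
    _ ≤ 2 / c.q (k + 1) + c.q (k + 1) / c.q k * (2 / c.q (k + 1)) := by
        rw [dist_comm]
        exact add_le_add happrox (hH.trans (by gcongr))
    _ = 2 / c.q (k + 1) + 2 / c.q k := by field_simp
    _ ≤ 2 / c.q k + 2 / c.q k := by
        have := c.q_cast_pos k
        gcongr
    _ = 4 / c.q k := by ring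

theorem exists_lt_dist_nsmul_step_le (n : ℕ) (t : Torus2) :
    ∃ l < c.s n * c.q n ^ 2, dist (l • c.step n) t ≤ 2 / c.q n := by
  obtain ⟨l, hl⟩ := c.exists_dist_nsmul_step_le n t
  refine ⟨l % (c.s n * c.q n ^ 2), Nat.mod_lt _ (mul_pos (c.s_pos n) (pow_pos (c.q_pos n) 2)), ?_⟩
  rwa [← nsmul_eq_mod_nsmul l (c.nsmul_step n)]

theorem exists_dist_H_le_dist_T_iterate_H (k : ℕ) (a v w : Torus2) :
    ∃ i < c.q (k + 2), dist (c.H (k + 1) w) (c.H (k + 1) (w + v)) ≤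
      dist (c.T^[i] (c.H (k + 1) a)) (c.T^[i] (c.H (k + 1) (a + v))) + 8 / c.q k := by
  obtain ⟨l, hl, hdist⟩ := c.exists_lt_dist_nsmul_step_le (k + 1) (w - a)
  refine ⟨c.q (k + 1) * l, ?_, ?_⟩
  · calc c.q (k + 1) * l < c.q (k + 1) * (c.s (k + 1) * c.q (k + 1) ^ 2) :=
          Nat.mul_lt_mul_of_pos_left hl (c.q_pos _)
      _ = c.q (k + 2) := by rw [← c.s_mul_q_pow (k + 1)]; ring
  · have ha := c.dist_T_iterate_H_le hl hdist
    have hav := c.dist_T_iterate_H_le (z := a + v) (w := w + v) hl <| by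
      rwa [add_sub_add_right_eq_sub]
    have htriangle := dist_triangle4_left (c.T^[c.q (k + 1) * l] (c.H (k + 1) a))
      (c.T^[c.q (k + 1) * l] (c.H (k + 1) (a + v))) (c.H (k + 1) w) (c.H (k + 1) (w + v))
    have h8 : (8 : ℝ) / c.q k = 4 / c.q k + 4 / c.q k := by ring
    linarith

theorem exists_one_fifth_le_dist_T_iterate_H (k : ℕ) (a : Torus2) {η : ℝ}
    (hη : η ∈ Icc (1 / (c.s (k + 1) : ℝ)) (1 - 1 / c.s (k + 1))) :
    ∃ i < c.q (k + 3), 1 / 5 ≤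
      dist (c.T^[i] (c.H (k + 2) a)) (c.T^[i] (c.H (k + 2) (a + (0, (η : Torus1))))) := by
  obtain ⟨w, hw⟩ := c.exists_two_fifths_le_dist_H k hη
  obtain ⟨i, hi, hdist⟩ := c.exists_dist_H_le_dist_T_iterate_H (k + 1) a (0, (η : Torus1)) w
  have hsmall : 8 / (c.q (k + 1) : ℝ) ≤ 8 / 1000 := by
    gcongr
    exact c.thousand_le_q_cast (k + 1)
  exact ⟨i, hi, by linarith⟩

theorem s_le_bowenCoverNum_T (k : ℕ) :
    c.s (k + 1) ≤ bowenCoverNum c.T (c.q (k + 3)) (1 / 10) := by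
  have hs := c.s_cast_pos (k + 1)
  let point (j : Fin (c.s (k + 1))) : Torus2 :=
    c.H (k + 2) (0, (((j : ℕ) / c.s (k + 1) : ℝ) : Torus1))
  suffices hsep : ∀ j j', j < j' → ∃ i < c.q (k + 3),
      2 * (1 / 10) ≤ dist (c.T^[i] (point j)) (c.T^[i] (point j')) by
    rw [← Fintype.card_fin (c.s (k + 1))]
    refine card_le_bowenCoverNum c.T.continuous (by norm_num) (z := point) fun j j' hne => ?_
    rcases hne.lt_or_gt with h | h
    · exact hsep j j' h
    · obtain ⟨i, hi, hdist⟩ := hsep j' j h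
      exact ⟨i, hi, hdist.trans_eq (dist_comm _ _)⟩
  intro j j' hlt
  have hle : ((j : ℕ) : ℝ) + 1 ≤ (j' : ℕ) := by exact_mod_cast hlt
  have hle' : ((j' : ℕ) : ℝ) + 1 ≤ c.s (k + 1) := by exact_mod_cast j'.isLt
  obtain ⟨i, hi, hdist⟩ := c.exists_one_fifth_le_dist_T_iterate_H k
    (0, (((j : ℕ) / c.s (k + 1) : ℝ) : Torus1))
    (η := ((j' : ℕ) - (j : ℕ)) / c.s (k + 1)) <| by
      rw [one_sub_div hs.ne']
      exact ⟨by gcongr; linarith, div_le_div_of_nonneg_right (by linarith) hs.le⟩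
  rw [Prod.mk_add_mk, add_zero, ← AddCircle.coe_add, ← add_div, add_sub_cancel] at hdist
  exact ⟨i, hi, by linarith⟩

theorem q_rpow_eq_s (k : ℕ) :
    (c.q (k + 2) : ℝ) ^ ((d - 3 : ℕ) / d ^ 2 : ℝ) = c.s k := by
  have hd : (d : ℝ) ≠ 0 := by
    have := c.five_le_exponent
    positivity
  have hq : (c.q (k + 2) : ℝ) = (c.q k : ℝ) ^ ((d : ℝ) ^ 2) := by
    rw [q_succ, q_succ, ← pow_mul, ← sq]
    exact_mod_cast rfl
  rw [hq, ← Real.rpow_mul (Nat.cast_nonneg _), mul_div_cancel₀ _ (pow_ne_zero 2 hd),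
    Real.rpow_natCast]
  exact_mod_cast rfl

theorem frequently_rpow_le_bowenCoverNum_T :
    ∃ᶠ m : ℕ in atTop, (m : ℝ) ^ ((d - 3 : ℕ) / d ^ 2 : ℝ) ≤ bowenCoverNum c.T m (1 / 10) := by
  refine ((tendsto_add_atTop_iff_nat 3).2 c.tendsto_q).frequently (.of_forall fun k => ?_)
  rw [c.q_rpow_eq_s (k + 1)]
  exact_mod_cast c.s_le_bowenCoverNum_T k

theorem exists_tendsto_topSlowEntFun_T :
    ∃ E, Tendsto (topSlowEntFun c.T polScale) (𝓝[>] 0) (𝓝 E) ∧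
      ((d - 3 : ℕ) / d ^ 2 : ℝ) ≤ E ∧ E ≤ ((d - 2 : ℕ) : ℝ)⁻¹ := by
  have hd := c.five_le_exponent
  have hγ : (0 : ℝ) < (d - 3 : ℕ) := by exact_mod_cast (by lia : 0 < d - 3)
  exact exists_tendsto_topSlowEntFun_polScale c.T.continuous (by norm_num)
    (div_pos hγ (pow_pos (by exact_mod_cast (by lia : 0 < d)) 2))
    (fun ε hε => c.exists_bowenCoverNum_T_le_mul_rpow hε) c.frequently_rpow_le_bowenCoverNum_T

end Params

end LowerBound

theorem sq_add_add_seven_le_pow_five {K : ℕ} (hK : 2 ≤ K) :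
    K ^ 2 + K + 7 ≤ K ^ 5 := by
  have hK5 : 2 ^ 3 * K ^ 2 ≤ K ^ 5 :=
    (Nat.mul_le_mul_right _ (Nat.pow_le_pow_left hK 3)).trans_eq (by ring)
  nlinarith

theorem Icc_subset_Ico_of_add_four_eq_pow_five {K d : ℕ} (hK : 2 ≤ K) (hd : d + 4 = K ^ 5) :
    Icc (((d : ℝ) - 3) / d ^ 2) (1 / ((d : ℝ) - 2)) ⊆
      Ico (1 / (K : ℝ) ^ 5) (1 / ((K : ℝ) ^ 5 - K - 8)) := by
  have hKd : (K : ℝ) ^ 2 + K + 3 ≤ d := by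
    have := sq_add_add_seven_le_pow_five hK
    exact_mod_cast (by lia : K ^ 2 + K + 3 ≤ d)
  have hK2 : (2 : ℝ) ≤ K := by exact_mod_cast hK
  have hd5 : (K : ℝ) ^ 5 = d + 4 := by exact_mod_cast hd.symm
  have hd12 : (12 : ℝ) ≤ d := by
    have := Nat.pow_le_pow_left hK 5
    exact_mod_cast (by lia : 12 ≤ d)
  rw [hd5]
  refine Icc_subset_Ico ?_ ?_
  · rw [div_le_div_iff₀ (by positivity) (by positivity)]
    nlinarith
  · exact one_div_lt_one_div_of_lt (by nlinarith) (by linarith)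

end AnosovKatok

theorem stmt9_general {r d : ℕ} (hd : (r + 1) ^ 2 + (r + 1) + 3 ≤ d) :
    ∃ T : Torus2 → Torus2,
      IsCkTorusDiffeo r T ∧ UniquelyErgodicWithVolume T ∧ IsoToIrrationalRotation T ∧
      ∃ E : ℝ, Tendsto (topSlowEntFun T polScale) (𝓝[>] 0) (𝓝 E) ∧
        ((d : ℝ) - 3) / d ^ 2 ≤ E ∧ E ≤ 1 / ((d : ℝ) - 2) := by
  obtain ⟨c⟩ := AnosovKatok.nonempty_params (Nat.le_add_left 1 r) hd
  obtain ⟨E, hE, hlower, hupper⟩ := c.exists_tendsto_topSlowEntFun_T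
  rw [Nat.cast_sub (by lia), Nat.cast_ofNat] at hlower hupper
  rw [← one_div] at hupper
  exact ⟨c.T, c.isCkTorusDiffeo_T, c.uniquelyErgodicWithVolume_T, c.isoToIrrationalRotation_T,
    E, hE, hlower, hupper⟩

/-- For every integer `K > 1` there exists a uniquely ergodic `C^{K-1}`
diffeomorphism `T` of `𝕋²` whose unique invariant Borel probability measure is the
Haar–Lebesgue measure, measure-theoretically isomorphic to an irrational circle
rotation, whose upper topological slow entropy `E` w.r.t. the polynomial scale
`a^{pol}_m(t) = m^t` satisfies `1/K⁵ ≤ E < 1/(K⁵ - K - 8)`. -/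
theorem stmt9 (K : ℕ) (hK : 1 < K) :
    ∃ T : Torus2 → Torus2,
      IsCkTorusDiffeo ((K - 1 : ℕ) : ℕ∞) T ∧
      UniquelyErgodicWithVolume T ∧
      IsoToIrrationalRotation T ∧
      ∃ E : ℝ,
        Filter.Tendsto (topSlowEntFun T polScale) (𝓝[>] (0 : ℝ)) (𝓝 E) ∧
        1 / (K : ℝ) ^ 5 ≤ E ∧ E < 1 / ((K : ℝ) ^ 5 - (K : ℝ) - 8) := by
  have hd := AnosovKatok.sq_add_add_seven_le_pow_five hK
  obtain ⟨T, hdiffeo, hergodic, hiso, E, hlim, hE⟩ :=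
    stmt9_general (r := K - 1) (d := K ^ 5 - 4) (by rw [Nat.sub_add_cancel hK.le]; lia)
  exact ⟨T, hdiffeo, hergodic, hiso, E, hlim,
    AnosovKatok.Icc_subset_Ico_of_add_four_eq_pow_five hK (by lia) hE⟩
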